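/- Let g be fixed and let F₁ satisfy the hypotheses of the extended Lienard theorem (f, g continuous on (−d,d); F₁ and g odd with g(x) > 0 for 0 < x < d; F₁ zero on (−d,d) only at 0, a, −a with 0 < a < d; F₁ monotone increasing on (a, ᾱ] and nondecreasing on (ᾱ, d) for the number ᾱ defined by the energy relations), so that the system ẋ = y − F₁(x), ẏ = −g(x) has a unique limit cycle Γ₁; let α̂ be its amplitude, i.e. the maximum of |x| over points (x, y) ∈ Γ₁. If F₂ also satisfies the same hypotheses with the same g, and F₂(x) = F₁(x) for all x with |x| ≤ α̂, then the unique limit cycle of ẋ = y − F₂(x), ẏ = −g(x) equals Γ₁; in particular its amplitude is also α̂. (The amplitude of the unique limit cycle is independent of the behavior of F as |x| → ∞.) -/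

import Mathlib

open Set Filter

/-- A solution of the Lienard system `ẋ = y - F x`, `ẏ = -g x`. -/
def IsSolution (F g : ℝ → ℝ) (x y : ℝ → ℝ) : Prop :=
  ∀ t : ℝ, HasDerivAt x (y t - F (x t)) t ∧ HasDerivAt y (-(g (x t))) t

/-- `Γ` is a closed orbit (limit cycle) of the Lienard system: the image of a
nonconstant periodic solution. -/
def IsPeriodicOrbitOf (F g : ℝ → ℝ) (Γ : Set (ℝ × ℝ)) : Prop :=
  ∃ x y : ℝ → ℝ, IsSolution F g x y ∧
    (∃ T : ℝ, 0 < T ∧ Function.Periodic x T ∧ Function.Periodic y T) ∧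
    (∃ t₁ t₂ : ℝ, x t₁ ≠ x t₂ ∨ y t₁ ≠ y t₂) ∧
    Γ = Set.range fun t => (x t, y t)

/-- `yp` is the ordinate `y₊(α) > 0` at which the trajectory through `Q = (α, F α)`,
followed backward in time, first meets the positive `y`-axis. -/
def IsYPlusAt (F g : ℝ → ℝ) (α yp : ℝ) : Prop :=
  0 < yp ∧ ∃ x y : ℝ → ℝ, IsSolution F g x y ∧ x 0 = α ∧ y 0 = F α ∧
    ∃ τ : ℝ, τ < 0 ∧ x τ = 0 ∧ y τ = yp ∧ ∀ t ∈ Set.Ioo τ 0, 0 < x t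

/-- `ym` is the ordinate `y₋(α) < 0` at which the trajectory through `Q = (α, F α)`,
followed forward in time, first meets the negative `y`-axis. -/
def IsYMinusAt (F g : ℝ → ℝ) (α ym : ℝ) : Prop :=
  ym < 0 ∧ ∃ x y : ℝ → ℝ, IsSolution F g x y ∧ x 0 = α ∧ y 0 = F α ∧
    ∃ τ : ℝ, 0 < τ ∧ x τ = 0 ∧ y τ = ym ∧ ∀ t ∈ Set.Ioo 0 τ, 0 < x t

/-- `abar = max (α', α'')` where `α'`, `α''` satisfy the energy relations
`G(α') = ½ y₊(α')² - ½ F(α')²` and `G(α'') = ½ y₋(α'')² - ½ F(α'')²`. -/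
def IsAlphaBar (F g : ℝ → ℝ) (abar : ℝ) : Prop :=
  ∃ α' α'' yp ym : ℝ, IsYPlusAt F g α' yp ∧ IsYMinusAt F g α'' ym ∧
    (∫ u in (0:ℝ)..α', g u) = yp ^ 2 / 2 - (F α') ^ 2 / 2 ∧
    (∫ u in (0:ℝ)..α'', g u) = ym ^ 2 / 2 - (F α'') ^ 2 / 2 ∧
    abar = max α' α''

/-- The hypotheses of the extended Lienard theorem (Theorem 2 of the paper). -/
def ExtLienardHyp (f g F : ℝ → ℝ) (d : ℝ) : Prop :=
  0 < d ∧ ContinuousOn f (Set.Ioo (-d) d) ∧ ContinuousOn g (Set.Ioo (-d) d) ∧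
  (∀ x, F x = ∫ u in (0:ℝ)..x, f u) ∧
  (∀ x, F (-x) = -F x) ∧ (∀ x, g (-x) = -g x) ∧
  (∀ x, 0 < x → x < d → 0 < g x) ∧
  ∃ a abar : ℝ, 0 < a ∧ a < d ∧
    (∀ x, -d < x → x < d → (F x = 0 ↔ x = 0 ∨ x = a ∨ x = -a)) ∧
    IsAlphaBar F g abar ∧ a < abar ∧ abar < d ∧
    StrictMonoOn F (Set.Ioc a abar) ∧ MonotoneOn F (Set.Ioo abar d)



lemma lie_strictMono {φ φ' : ℝ → ℝ} {a b : ℝ} (hc : ContinuousOn φ (Icc a b))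
    (hd : ∀ t ∈ Ioo a b, HasDerivAt φ (φ' t) t) (hpos : ∀ t ∈ Ioo a b, 0 < φ' t) :
    StrictMonoOn φ (Icc a b) := by
  apply strictMonoOn_of_deriv_pos (convex_Icc a b) hc
  intro t ht
  rw [interior_Icc] at ht
  rw [(hd t ht).deriv]
  exact hpos t ht

lemma lie_mono {φ φ' : ℝ → ℝ} {a b : ℝ} (hc : ContinuousOn φ (Icc a b))
    (hd : ∀ t ∈ Ioo a b, HasDerivAt φ (φ' t) t) (hpos : ∀ t ∈ Ioo a b, 0 ≤ φ' t) :
    MonotoneOn φ (Icc a b) := by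
  apply monotoneOn_of_deriv_nonneg (convex_Icc a b) hc
  · intro t ht
    rw [interior_Icc] at ht
    exact (hd t ht).differentiableAt.differentiableWithinAt
  · intro t ht
    rw [interior_Icc] at ht
    rw [(hd t ht).deriv]
    exact hpos t ht

lemma lie_strictAnti {φ φ' : ℝ → ℝ} {a b : ℝ} (hc : ContinuousOn φ (Icc a b))
    (hd : ∀ t ∈ Ioo a b, HasDerivAt φ (φ' t) t) (hneg : ∀ t ∈ Ioo a b, φ' t < 0) :
    StrictAntiOn φ (Icc a b) := by
  apply strictAntiOn_of_deriv_neg (convex_Icc a b) hc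
  intro t ht
  rw [interior_Icc] at ht
  rw [(hd t ht).deriv]
  exact hneg t ht

lemma lie_inv_mono {φ φ' : ℝ → ℝ} {a b : ℝ} (hab : a < b) (hc : ContinuousOn φ (Icc a b))
    (hd : ∀ t ∈ Ioo a b, HasDerivAt φ (φ' t) t) (hpos : ∀ t ∈ Ioo a b, 0 < φ' t) :
    ∃ ψ : ℝ → ℝ, ContinuousOn ψ (Icc (φ a) (φ b)) ∧
      (∀ s ∈ Icc (φ a) (φ b), ψ s ∈ Icc a b ∧ φ (ψ s) = s) ∧
      (∀ t ∈ Icc a b, ψ (φ t) = t) ∧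
      ∀ s ∈ Ioo (φ a) (φ b), ψ s ∈ Ioo a b ∧ HasDerivAt ψ (φ' (ψ s))⁻¹ s := by
  have hm := lie_strictMono hc hd hpos
  have hinj := hm.injOn
  set ψ := Function.invFunOn φ (Icc a b) with hψ
  have h1 : ∀ s ∈ Icc (φ a) (φ b), ψ s ∈ Icc a b ∧ φ (ψ s) = s := by
    intro s hs
    have hs' : s ∈ φ '' Icc a b := intermediate_value_Icc hab.le hc hs
    exact ⟨Function.invFunOn_mem hs', Function.invFunOn_eq hs'⟩
  have hmap : ∀ t ∈ Icc a b, φ t ∈ Icc (φ a) (φ b) := by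
    intro t ht
    exact ⟨hm.monotoneOn (left_mem_Icc.2 hab.le) ht ht.1,
      hm.monotoneOn ht (right_mem_Icc.2 hab.le) ht.2⟩
  have h2 : ∀ t ∈ Icc a b, ψ (φ t) = t := by
    intro t ht
    have := h1 _ (hmap t ht)
    exact hinj this.1 ht this.2
  have h3 : ContinuousOn ψ (Icc (φ a) (φ b)) := by
    rw [continuousOn_iff_isClosed]
    intro C hC
    refine ⟨φ '' (C ∩ Icc a b), ?_, ?_⟩
    · apply IsCompact.isClosed
      apply IsCompact.image_of_continuousOn
      · exact isCompact_Icc.inter_left hC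
      · exact hc.mono inter_subset_right
    · ext s
      constructor
      · rintro ⟨hs1, hs2⟩
        exact ⟨⟨ψ s, ⟨hs1, (h1 s hs2).1⟩, (h1 s hs2).2⟩, hs2⟩
      · rintro ⟨⟨t, ⟨ht1, ht2⟩, rfl⟩, hs2⟩
        refine ⟨?_, hs2⟩
        rw [mem_preimage, h2 t ht2]
        exact ht1
  refine ⟨ψ, h3, h1, h2, ?_⟩
  intro s hs
  have hs' := Ioo_subset_Icc_self hs
  have hmem : ψ s ∈ Ioo a b := by
    refine ⟨lt_of_le_of_ne (h1 s hs').1.1 ?_, lt_of_le_of_ne (h1 s hs').1.2 ?_⟩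
    · intro h
      have := (h1 s hs').2
      rw [← h] at this
      exact absurd this hs.1.ne
    · intro h
      have := (h1 s hs').2
      rw [h] at this
      exact absurd this hs.2.ne'
  refine ⟨hmem, ?_⟩
  apply HasDerivAt.of_local_left_inverse (f := φ)
  · exact h3.continuousAt (Icc_mem_nhds hs.1 hs.2)
  · exact hd _ hmem
  · exact (hpos _ hmem).ne'
  · filter_upwards [Icc_mem_nhds hs.1 hs.2] with z hz using (h1 z hz).2

lemma lie_inv_anti {φ φ' : ℝ → ℝ} {a b : ℝ} (hab : a < b) (hc : ContinuousOn φ (Icc a b))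
    (hd : ∀ t ∈ Ioo a b, HasDerivAt φ (φ' t) t) (hneg : ∀ t ∈ Ioo a b, φ' t < 0) :
    ∃ ψ : ℝ → ℝ, ContinuousOn ψ (Icc (φ b) (φ a)) ∧
      (∀ s ∈ Icc (φ b) (φ a), ψ s ∈ Icc a b ∧ φ (ψ s) = s) ∧
      (∀ t ∈ Icc a b, ψ (φ t) = t) ∧
      ∀ s ∈ Ioo (φ b) (φ a), ψ s ∈ Ioo a b ∧ HasDerivAt ψ (φ' (ψ s))⁻¹ s := by
  have key := lie_inv_mono (φ := fun t => φ (-t)) (φ' := fun t => - φ' (-t)) (a := -b) (b := -a)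
    (by linarith)
    (hc.comp continuousOn_neg (by intro t ht; exact ⟨by linarith [ht.2], by linarith [ht.1]⟩))
    (by
      intro t ht
      have h := hd (-t) ⟨by linarith [ht.2], by linarith [ht.1]⟩
      have := h.comp t (hasDerivAt_neg t)
      exact HasDerivAt.congr_deriv this (by simp))
    (by
      intro t ht
      have h := hneg (-t) ⟨by linarith [ht.2], by linarith [ht.1]⟩
      linarith)
  simp only [neg_neg] at key
  obtain ⟨ψ, h1, h2, h3, h4⟩ := key
  refine ⟨fun s => - ψ s, h1.neg, ?_, ?_, ?_⟩
  · intro s hs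
    obtain ⟨h, h'⟩ := h2 s hs
    exact ⟨⟨by linarith [h.2], by linarith [h.1]⟩, h'⟩
  · intro t ht
    have := h3 (-t) ⟨by linarith [ht.2], by linarith [ht.1]⟩
    rw [neg_neg] at this
    simp [this]
  · intro s hs
    obtain ⟨h, h'⟩ := h4 s hs
    refine ⟨⟨by linarith [h.2], by linarith [h.1]⟩, ?_⟩
    have := h'.neg
    exact HasDerivAt.congr_deriv this (by rw [inv_neg, neg_neg])

/-- If `h' = -1 < 0` at each zero of `h` then `h` changes sign at its zero. -/
lemma lie_sign {h h' : ℝ → ℝ} {lo hi m : ℝ} (hm : m ∈ Ioo lo hi)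
    (hd : ∀ t ∈ Ioo lo hi, HasDerivAt h (h' t) t)
    (hz : ∀ t ∈ Ioo lo hi, h t = 0 → h' t < 0) (h0 : h m = 0) :
    (∀ t ∈ Ioo lo m, 0 < h t) ∧ (∀ t ∈ Ioo m hi, h t < 0) := by
  -- right side, weak
  have key : ∀ (k k' : ℝ → ℝ) (a b : ℝ), (∀ t ∈ Icc a b, HasDerivAt k (k' t) t) →
      (∀ t ∈ Icc a b, k t = 0 → k' t < 0) → k a = 0 → ∀ t ∈ Icc a b, k t ≤ 0 := by
    intro k k' a b hk hk0 hka t ht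
    exact image_le_of_deriv_right_lt_deriv_boundary (f := k) (f' := k') (B := fun _ => 0)
      (B' := fun _ => 0)
      (fun s hs => (hk s hs).continuousAt.continuousWithinAt)
      (fun s hs => (hk s (Ico_subset_Icc_self hs)).hasDerivWithinAt) hka.le
      (fun s => hasDerivAt_const s 0) (fun s hs hs0 => hk0 s (Ico_subset_Icc_self hs) hs0) ht
  have hR : ∀ t ∈ Ioo m hi, h t ≤ 0 := by
    intro t ht
    refine key h h' m t ?_ ?_ h0 t ⟨ht.1.le, le_rfl⟩
    · intro s hs; exact hd s ⟨by linarith [hm.1, hs.1], by linarith [hs.2, ht.2]⟩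
    · intro s hs; exact hz s ⟨by linarith [hm.1, hs.1], by linarith [hs.2, ht.2]⟩
  have hL : ∀ t ∈ Ioo lo m, 0 ≤ h t := by
    intro t ht
    have := key (fun s => - h (-s)) (fun s => h' (-s)) (-m) (-t) ?_ ?_ (by simp [h0]) (-t)
      ⟨by linarith [ht.2], le_rfl⟩
    · simpa using this
    · intro s hs
      have h1 := hd (-s) ⟨by linarith [ht.1, hs.2], by linarith [hs.1, hm.2]⟩
      have := (h1.comp s (hasDerivAt_neg s)).neg
      exact HasDerivAt.congr_deriv this (by simp)
    · intro s hs hs0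
      exact hz (-s) ⟨by linarith [ht.1, hs.2], by linarith [hs.1, hm.2]⟩ (by linarith)
  constructor
  · intro t ht
    refine lt_of_le_of_ne (hL t ht) fun h1 => ?_
    have ht' : t ∈ Ioo lo hi := ⟨ht.1, ht.2.trans hm.2⟩
    have : IsLocalMin h t := by
      filter_upwards [Ioo_mem_nhds ht.1 ht.2] with s hs
      rw [← h1]; exact hL s hs
    have h2 := this.hasDerivAt_eq_zero (hd t ht')
    linarith [hz t ht' h1.symm]
  · intro t ht
    refine lt_of_le_of_ne (hR t ht) fun h1 => ?_
    have ht' : t ∈ Ioo lo hi := ⟨hm.1.trans ht.1, ht.2⟩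
    have : IsLocalMax h t := by
      filter_upwards [Ioo_mem_nhds ht.1 ht.2] with s hs
      rw [h1]; exact hR s hs
    have h2 := this.hasDerivAt_eq_zero (hd t ht')
    linarith [hz t ht' h1]


/-- Properties of `Φ = F ∘ G⁻¹`. -/
structure LiePhi (Φ φ : ℝ → ℝ) (A U : ℝ) : Prop where
  hA : 0 < A
  hAU : A < U
  deriv : ∀ s ∈ Ioo 0 U, HasDerivAt Φ (φ s) s
  cont : ContinuousOn φ (Ioo 0 U)
  neg : ∀ s ∈ Ioo 0 A, Φ s < 0
  zero : Φ A = 0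
  pos : ∀ s ∈ Ioo A U, 0 < Φ s
  mono : MonotoneOn Φ (Ico A U)

/-- A right half-orbit, parametrised by the ordinate, with potential energy `u`. -/
structure LieArc (Φ : ℝ → ℝ) (U lo hi : ℝ) (u : ℝ → ℝ) : Prop where
  hlo : lo < 0
  hhi : 0 < hi
  cont : ContinuousOn u (Icc lo hi)
  ulo : u lo = 0
  uhi : u hi = 0
  mem : ∀ η ∈ Ioo lo hi, u η ∈ Ioo 0 U
  deriv : ∀ η ∈ Ioo lo hi, HasDerivAt u (Φ (u η) - η) η

lemma LieArc.eqOn_Ioo {Φ φ u₁ u₂ : ℝ → ℝ} {A U L H η₀ : ℝ} (hΦ : LiePhi Φ φ A U)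
    (m1 : ∀ η ∈ Ioo L H, u₁ η ∈ Ioo 0 U) (d1 : ∀ η ∈ Ioo L H, HasDerivAt u₁ (Φ (u₁ η) - η) η)
    (m2 : ∀ η ∈ Ioo L H, u₂ η ∈ Ioo 0 U) (d2 : ∀ η ∈ Ioo L H, HasDerivAt u₂ (Φ (u₂ η) - η) η)
    (h0 : η₀ ∈ Ioo L H) (he : u₁ η₀ = u₂ η₀) : EqOn u₁ u₂ (Ioo L H) := by
  intro η hη
  set l := (L + min η η₀) / 2 with hl
  set r := (max η η₀ + H) / 2 with hr
  have hmin : L < min η η₀ := lt_min hη.1 h0.1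
  have hmax : max η η₀ < H := max_lt hη.2 h0.2
  have hmin1 := min_le_left η η₀
  have hmin2 := min_le_right η η₀
  have hmax1 := le_max_left η η₀
  have hmax2 := le_max_right η η₀
  have hsub : Icc l r ⊆ Ioo L H := fun t ht => ⟨by linarith [ht.1], by linarith [ht.2]⟩
  have hη' : η ∈ Ioo l r := ⟨by linarith, by linarith⟩
  have hη0' : η₀ ∈ Ioo l r := ⟨by linarith, by linarith⟩
  set K := u₁ '' Icc l r ∪ u₂ '' Icc l r with hK
  have hKc : IsCompact K := by
    apply IsCompact.union
    · exact isCompact_Icc.image_of_continuousOn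
        fun t ht => (d1 t (hsub ht)).continuousAt.continuousWithinAt
    · exact isCompact_Icc.image_of_continuousOn
        fun t ht => (d2 t (hsub ht)).continuousAt.continuousWithinAt
  have hKn : K.Nonempty := ⟨u₁ η, Or.inl ⟨η, Ioo_subset_Icc_self hη', rfl⟩⟩
  have hKs : K ⊆ Ioo 0 U := by
    rintro s (⟨t, ht, rfl⟩ | ⟨t, ht, rfl⟩)
    · exact m1 t (hsub ht)
    · exact m2 t (hsub ht)
  obtain ⟨δ, hδ⟩ := hKc.exists_isLeast hKn
  obtain ⟨M, hM⟩ := hKc.exists_isGreatest hKn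
  have hI : Icc δ M ⊆ Ioo 0 U := fun s hs =>
    ⟨(hKs hδ.1).1.trans_le hs.1, hs.2.trans_lt (hKs hM.1).2⟩
  obtain ⟨C, hC⟩ := isCompact_Icc.exists_bound_of_continuousOn (hΦ.cont.mono hI)
  have hlip : ∀ t ∈ Ioo l r, LipschitzOnWith (Real.toNNReal C) (fun s => Φ s - t) (Icc δ M) := by
    intro t _
    apply Convex.lipschitzOnWith_of_nnnorm_hasDerivWithin_le (f' := φ) (convex_Icc δ M)
    · intro s hs
      exact ((hΦ.deriv s (hI hs)).sub_const t).hasDerivWithinAt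
    · intro s hs
      rw [← NNReal.coe_le_coe, coe_nnnorm]
      exact (hC s hs).trans (Real.le_coe_toNNReal C)
  refine ODE_solution_unique_of_mem_Ioo (v := fun t s => Φ s - t) (s := fun _ => Icc δ M) hlip
    hη0' ?_ ?_ he hη'
  · intro t ht
    have ht' := Ioo_subset_Icc_self ht
    have hk : u₁ t ∈ K := Or.inl ⟨t, ht', rfl⟩
    exact ⟨d1 t (hsub ht'), hδ.2 hk, hM.2 hk⟩
  · intro t ht
    have ht' := Ioo_subset_Icc_self ht
    have hk : u₂ t ∈ K := Or.inr ⟨t, ht', rfl⟩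
    exact ⟨d2 t (hsub ht'), hδ.2 hk, hM.2 hk⟩

lemma LieArc.unique {Φ φ u₁ u₂ : ℝ → ℝ} {A U lo₁ hi₁ lo₂ hi₂ η₀ : ℝ} (hΦ : LiePhi Φ φ A U)
    (a1 : LieArc Φ U lo₁ hi₁ u₁) (a2 : LieArc Φ U lo₂ hi₂ u₂)
    (h1 : η₀ ∈ Ioo lo₁ hi₁) (h2 : η₀ ∈ Ioo lo₂ hi₂) (he : u₁ η₀ = u₂ η₀) :
    lo₁ = lo₂ ∧ hi₁ = hi₂ ∧ EqOn u₁ u₂ (Icc lo₁ hi₁) := by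
  set L := max lo₁ lo₂ with hL
  set H := min hi₁ hi₂ with hH
  have hL1 : lo₁ ≤ L := le_max_left _ _
  have hL2 : lo₂ ≤ L := le_max_right _ _
  have hH1 : H ≤ hi₁ := min_le_left _ _
  have hH2 : H ≤ hi₂ := min_le_right _ _
  have h0 : η₀ ∈ Ioo L H := ⟨max_lt h1.1 h2.1, lt_min h1.2 h2.2⟩
  have hLH : L < H := h0.1.trans h0.2
  have s1 : Ioo L H ⊆ Ioo lo₁ hi₁ := Ioo_subset_Ioo hL1 hH1
  have s2 : Ioo L H ⊆ Ioo lo₂ hi₂ := Ioo_subset_Ioo hL2 hH2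
  have e0 := LieArc.eqOn_Ioo hΦ (fun η h => a1.mem η (s1 h)) (fun η h => a1.deriv η (s1 h))
    (fun η h => a2.mem η (s2 h)) (fun η h => a2.deriv η (s2 h)) h0 he
  have e1 : EqOn u₁ u₂ (Icc L H) := by
    refine e0.of_subset_closure (a1.cont.mono (Icc_subset_Icc hL1 hH1))
      (a2.cont.mono (Icc_subset_Icc hL2 hH2)) Ioo_subset_Icc_self ?_
    rw [closure_Ioo hLH.ne]
  have eL := e1 (left_mem_Icc.2 hLH.le)
  have eH := e1 (right_mem_Icc.2 hLH.le)
  have hlo : lo₁ = lo₂ := by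
    rcases lt_trichotomy lo₁ lo₂ with h | h | h
    · have : L = lo₂ := max_eq_right h.le
      rw [this, a2.ulo] at eL
      have := (a1.mem lo₂ ⟨h, by linarith⟩).1
      linarith
    · exact h
    · have : L = lo₁ := max_eq_left h.le
      rw [this, a1.ulo] at eL
      have := (a2.mem lo₁ ⟨h, by linarith⟩).1
      linarith
  have hhi : hi₁ = hi₂ := by
    rcases lt_trichotomy hi₁ hi₂ with h | h | h
    · have : H = hi₁ := min_eq_left h.le
      rw [this, a1.uhi] at eH
      have := (a2.mem hi₁ ⟨by linarith, h⟩).1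
      linarith
    · exact h
    · have : H = hi₂ := min_eq_right h.le
      rw [this, a2.uhi] at eH
      have := (a1.mem hi₂ ⟨by linarith, h⟩).1
      linarith
  refine ⟨hlo, hhi, ?_⟩
  have : L = lo₁ := by rw [hL, ← hlo, max_self]
  rw [this] at e1
  have : H = hi₁ := by rw [hH, ← hhi, min_self]
  rw [this] at e1
  exact e1

lemma LieArc.nest {Φ φ u₁ u₂ : ℝ → ℝ} {A U lo₁ hi₁ lo₂ hi₂ : ℝ} (hΦ : LiePhi Φ φ A U)
    (a1 : LieArc Φ U lo₁ hi₁ u₁) (a2 : LieArc Φ U lo₂ hi₂ u₂) (h : hi₁ < hi₂) : lo₂ ≤ lo₁ := by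
  by_contra hcon
  push Not at hcon
  have hl2 := a2.hlo
  have hh1 := a1.hhi
  have c1 : ContinuousOn u₁ (Icc lo₂ hi₁) := a1.cont.mono (Icc_subset_Icc hcon.le le_rfl)
  have c2 : ContinuousOn u₂ (Icc lo₂ hi₁) := a2.cont.mono (Icc_subset_Icc le_rfl h.le)
  have p1 := (a1.mem lo₂ ⟨hcon, by linarith⟩).1
  have p2 := (a2.mem hi₁ ⟨by linarith, h⟩).1
  have := intermediate_value_Ioo (by linarith : lo₂ ≤ hi₁) (c2.sub c1)
  obtain ⟨η, hη, he⟩ := this (show (0 : ℝ) ∈ _ from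
    ⟨by simp only [Pi.sub_apply, a2.ulo]; linarith, by simp only [Pi.sub_apply, a1.uhi]; linarith⟩)
  have he' : u₁ η = u₂ η := by simp only [Pi.sub_apply] at he; linarith
  have := LieArc.unique hΦ a1 a2 ⟨by linarith [hη.1], hη.2⟩ ⟨hη.1, by linarith [hη.2]⟩ he'
  linarith [this.1]

lemma LieArc.unimodal {Φ φ u : ℝ → ℝ} {A U lo hi : ℝ} (hΦ : LiePhi Φ φ A U)
    (a : LieArc Φ U lo hi u) : ∃ m ∈ Ioo lo hi,
      (∀ η ∈ Ioo lo m, 0 < Φ (u η) - η) ∧ (∀ η ∈ Ioo m hi, Φ (u η) - η < 0) := by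
  have h1 := a.hlo
  have h2 := a.hhi
  obtain ⟨m, hm, hmax⟩ := isCompact_Icc.exists_isMaxOn
    (nonempty_Icc.2 (by linarith : lo ≤ hi)) a.cont
  have hpos : 0 < u m := (a.mem 0 ⟨h1, h2⟩).1.trans_le (hmax ⟨h1.le, h2.le⟩)
  have hm' : m ∈ Ioo lo hi := by
    refine ⟨lt_of_le_of_ne hm.1 ?_, lt_of_le_of_ne hm.2 ?_⟩
    · rintro rfl; rw [a.ulo] at hpos; exact lt_irrefl _ hpos
    · rintro rfl; rw [a.uhi] at hpos; exact lt_irrefl _ hpos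
  have hloc : IsLocalMax u m := hmax.isLocalMax (Icc_mem_nhds hm'.1 hm'.2)
  have h0 := hloc.hasDerivAt_eq_zero (a.deriv m hm')
  refine ⟨m, hm', ?_⟩
  refine lie_sign (h := fun η => Φ (u η) - η)
    (h' := fun η => φ (u η) * (Φ (u η) - η) - 1) hm' ?_ ?_ h0
  · intro η hη
    have := (hΦ.deriv (u η) (a.mem η hη)).comp η (a.deriv η hη)
    exact this.sub (hasDerivAt_id η)
  · intro η hη h
    rw [show φ (u η) * (Φ (u η) - η) - 1 = φ (u η) * 0 - 1 by rw [← h]]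
    simp

lemma LieArc.energy {Φ u : ℝ → ℝ} {U lo hi : ℝ} (a : LieArc Φ U lo hi u) :
    ContinuousOn (fun η => u η + η ^ 2 / 2) (Icc lo hi) ∧
    ∀ η ∈ Ioo lo hi, HasDerivAt (fun η => u η + η ^ 2 / 2) (Φ (u η)) η := by
  constructor
  · exact a.cont.add (by fun_prop)
  · intro η hη
    have h1 : HasDerivAt (fun η : ℝ => η ^ 2 / 2) η η := by
      have := (hasDerivAt_pow 2 η).div_const 2
      exact this.congr_deriv (by simp)
    exact ((a.deriv η hη).add h1).congr_deriv (by ring)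

lemma LieArc.shape {Φ φ u : ℝ → ℝ} {A U p : ℝ} (hΦ : LiePhi Φ φ A U)
    (a : LieArc Φ U (-p) p u) : ∃ c m b : ℝ, -p < c ∧ c < m ∧ m < b ∧ b < p ∧
      u c = A ∧ u b = A ∧ StrictMonoOn u (Icc (-p) m) ∧ StrictAntiOn u (Icc m p) ∧
      (∀ η ∈ Ioo (-p) m, 0 < Φ (u η) - η) ∧ (∀ η ∈ Ioo m p, Φ (u η) - η < 0) := by
  obtain ⟨m, hm, hl, hr⟩ := a.unimodal hΦ
  have sm : StrictMonoOn u (Icc (-p) m) := lie_strictMono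
    (a.cont.mono (Icc_subset_Icc le_rfl hm.2.le))
    (fun t ht => a.deriv t ⟨ht.1, ht.2.trans hm.2⟩) hl
  have sa : StrictAntiOn u (Icc m p) := lie_strictAnti
    (a.cont.mono (Icc_subset_Icc hm.1.le le_rfl))
    (fun t ht => a.deriv t ⟨hm.1.trans ht.1, ht.2⟩) hr
  have hpeak : A < u m := by
    by_contra hcon
    push Not at hcon
    obtain ⟨ec, ed⟩ := a.energy
    have w1 := lie_strictAnti (ec.mono (Icc_subset_Icc le_rfl hm.2.le))
      (fun t ht => ed t ⟨ht.1, ht.2.trans hm.2⟩) (by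
        intro t ht
        refine hΦ.neg _ ⟨(a.mem t ⟨ht.1, ht.2.trans hm.2⟩).1, lt_of_lt_of_le ?_ hcon⟩
        exact sm ⟨ht.1.le, ht.2.le⟩ ⟨hm.1.le, le_rfl⟩ ht.2)
    have w2 := lie_strictAnti (ec.mono (Icc_subset_Icc hm.1.le le_rfl))
      (fun t ht => ed t ⟨hm.1.trans ht.1, ht.2⟩) (by
        intro t ht
        refine hΦ.neg _ ⟨(a.mem t ⟨hm.1.trans ht.1, ht.2⟩).1, lt_of_lt_of_le ?_ hcon⟩
        exact sa ⟨le_rfl, hm.2.le⟩ ⟨ht.1.le, ht.2.le⟩ ht.1)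
    have e1 := w1 ⟨le_rfl, hm.1.le⟩ ⟨hm.1.le, le_rfl⟩ hm.1
    have e2 := w2 ⟨le_rfl, hm.2.le⟩ ⟨hm.2.le, le_rfl⟩ hm.2
    simp only [a.ulo, a.uhi] at e1 e2
    nlinarith
  have hA := hΦ.hA
  obtain ⟨c, hc, hcA⟩ := intermediate_value_Ioo hm.1.le
    (a.cont.mono (Icc_subset_Icc le_rfl hm.2.le)) (show A ∈ Ioo (u (-p)) (u m) from
      ⟨by rw [a.ulo]; exact hA, hpeak⟩)
  obtain ⟨b, hb, hbA⟩ := intermediate_value_Ioo' hm.2.le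
    (a.cont.mono (Icc_subset_Icc hm.1.le le_rfl)) (show A ∈ Ioo (u p) (u m) from
      ⟨by rw [a.uhi]; exact hA, hpeak⟩)
  exact ⟨c, m, b, hc.1, hc.2, hb.1, hb.2, hcA, hbA, sm, sa, hl, hr⟩

lemma lie_sq_deriv {Φs y : ℝ} {Y : ℝ → ℝ} {s : ℝ} (h : HasDerivAt Y (Φs - y)⁻¹ s) (hy : Y s = y) :
    HasDerivAt (fun s => Y s ^ 2) (2 * y * (Φs - y)⁻¹) s := by
  have := h.pow 2
  refine HasDerivAt.congr_deriv this ?_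
  simp [hy]

lemma lie_frac {P a b : ℝ} (h : 0 < (P - a) * (P - b)) :
    2 * b * (P - b)⁻¹ - 2 * a * (P - a)⁻¹ = 2 * P * (b - a) / ((P - a) * (P - b)) := by
  have h1 : P - a ≠ 0 := fun h0 => by simp [h0] at h
  have h2 : P - b ≠ 0 := fun h0 => by simp [h0] at h
  field_simp
  ring

lemma LieArc.lt_false {Φ φ u₁ u₂ : ℝ → ℝ} {A U p q : ℝ} (hΦ : LiePhi Φ φ A U)
    (a1 : LieArc Φ U (-p) p u₁) (a2 : LieArc Φ U (-q) q u₂) (hpq : p ≤ q)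
    (hlt : ∀ η ∈ Ioo (-p) p, u₁ η < u₂ η) : False := by
  obtain ⟨c₁, m₁, b₁, i1, i2, i3, i4, uc1, ub1, sm1, sa1, hl1, hr1⟩ := a1.shape hΦ
  obtain ⟨c₂, m₂, b₂, j1, j2, j3, j4, uc2, ub2, sm2, sa2, hl2, hr2⟩ := a2.shape hΦ
  have hA := hΦ.hA
  have hle : ∀ η ∈ Icc (-p) p, u₁ η ≤ u₂ η := by
    intro η hη
    have hn : ∀ η ∈ Icc (-q) q, 0 ≤ u₂ η := by
      intro η hη
      rcases eq_or_lt_of_le hη.1 with h | h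
      · rw [← h, a2.ulo]
      rcases eq_or_lt_of_le hη.2 with h' | h'
      · rw [h', a2.uhi]
      exact (a2.mem η ⟨h, h'⟩).1.le
    rcases eq_or_lt_of_le hη.1 with h | h
    · have h5 := hn (-p) ⟨by linarith, by linarith [a2.hhi, a1.hhi]⟩
      rw [← h, a1.ulo]; exact h5
    rcases eq_or_lt_of_le hη.2 with h' | h'
    · have h5 := hn p ⟨by linarith [a2.hhi, a1.hhi], by linarith⟩
      rw [h', a1.uhi]; exact h5
    exact (hlt η ⟨h, h'⟩).le
  have mem1 : ∀ t ∈ Icc c₁ b₁, A ≤ u₁ t := by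
    intro t ht
    rcases le_total t m₁ with h | h
    · rw [← uc1]
      exact sm1.monotoneOn ⟨by linarith, by linarith⟩ ⟨by linarith [ht.1], h⟩ ht.1
    · rw [← ub1]
      exact sa1.antitoneOn ⟨h, by linarith [ht.2]⟩ ⟨by linarith, by linarith⟩ ht.2
  have mem2 : ∀ t ∈ Ioo c₂ b₂, A < u₂ t := by
    intro t ht
    rcases le_total t m₂ with h | h
    · rw [← uc2]
      exact sm2 ⟨by linarith, by linarith⟩ ⟨by linarith [ht.1], h⟩ ht.1
    · rw [← ub2]
      exact sa2 ⟨h, by linarith [ht.2]⟩ ⟨by linarith, by linarith⟩ ht.2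
  have mem2' : ∀ t ∈ Ioo (-q) q, A < u₂ t → t ∈ Ioo c₂ b₂ := by
    intro t ht hAt
    constructor
    · by_contra h
      push Not at h
      have := sm2.monotoneOn ⟨ht.1.le, by linarith⟩ ⟨by linarith, by linarith⟩ h
      linarith
    · by_contra h
      push Not at h
      have := sa2.antitoneOn ⟨by linarith, by linarith⟩ ⟨by linarith, ht.2.le⟩ h
      linarith
  have hb : b₁ ∈ Ioo c₂ b₂ := mem2' b₁ ⟨by linarith, by linarith⟩ (by
    have := hlt b₁ ⟨by linarith, by linarith⟩
    linarith)
  have hc : c₁ ∈ Ioo c₂ b₂ := mem2' c₁ ⟨by linarith, by linarith⟩ (by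
    have := hlt c₁ ⟨by linarith, by linarith⟩
    linarith)
  -- middle part
  have M1 : u₂ c₁ - u₁ c₁ ≤ u₂ b₁ - u₁ b₁ := by
    refine lie_mono (φ := fun η => u₂ η - u₁ η)
      (φ' := fun η => (Φ (u₂ η) - η) - (Φ (u₁ η) - η)) (a := c₁) (b := b₁) ?_ ?_ ?_
      ⟨le_rfl, by linarith⟩ ⟨by linarith, le_rfl⟩ (by linarith)
    · exact (a2.cont.mono (Icc_subset_Icc (by linarith) (by linarith))).sub
        (a1.cont.mono (Icc_subset_Icc (by linarith) (by linarith)))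
    · intro t ht
      exact (a2.deriv t ⟨by linarith [ht.1], by linarith [ht.2]⟩).sub
        (a1.deriv t ⟨by linarith [ht.1], by linarith [ht.2]⟩)
    · intro t ht
      have k1 := a1.mem t ⟨by linarith [ht.1], by linarith [ht.2]⟩
      have k2 := a2.mem t ⟨by linarith [ht.1], by linarith [ht.2]⟩
      have k3 := hlt t ⟨by linarith [ht.1], by linarith [ht.2]⟩
      have k4 := mem1 t ⟨ht.1.le, ht.2.le⟩
      have := hΦ.mono ⟨k4, k1.2⟩ ⟨by linarith, k2.2⟩ k3.le
      linarith
  obtain ⟨ec, ed⟩ := a2.energy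
  have sE := lie_strictMono (ec.mono (Icc_subset_Icc j1.le j4.le))
    (fun t ht => ed t ⟨by linarith [ht.1], by linarith [ht.2]⟩)
    (fun t ht => hΦ.pos _ ⟨mem2 t ht, (a2.mem t ⟨by linarith [ht.1], by linarith [ht.2]⟩).2⟩)
  have M2 := sE ⟨hb.1.le, hb.2.le⟩ ⟨by linarith, le_rfl⟩ hb.2
  have M3 := sE ⟨le_rfl, by linarith⟩ ⟨hc.1.le, hc.2.le⟩ hc.1
  simp only [uc2, ub2] at M2 M3
  -- upper part
  have UP : b₂ ^ 2 - b₁ ^ 2 ≤ q ^ 2 - p ^ 2 := by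
    obtain ⟨Y₁, yc1, yi1, yj1, yd1⟩ := lie_inv_anti i4
      (a1.cont.mono (Icc_subset_Icc (by linarith) le_rfl))
      (fun t ht => a1.deriv t ⟨by linarith [ht.1], ht.2⟩)
      (fun t ht => hr1 t ⟨by linarith [ht.1], ht.2⟩)
    obtain ⟨Y₂, yc2, yi2, yj2, yd2⟩ := lie_inv_anti j4
      (a2.cont.mono (Icc_subset_Icc (by linarith) le_rfl))
      (fun t ht => a2.deriv t ⟨by linarith [ht.1], ht.2⟩)
      (fun t ht => hr2 t ⟨by linarith [ht.1], ht.2⟩)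
    have e1 := yj1 b₁ ⟨le_rfl, i4.le⟩
    have e2 := yj1 p ⟨i4.le, le_rfl⟩
    have e3 := yj2 b₂ ⟨le_rfl, j4.le⟩
    have e4 := yj2 q ⟨j4.le, le_rfl⟩
    rw [ub1, a1.uhi] at *
    rw [ub2, a2.uhi] at *
    have := lie_mono (φ := fun s => Y₁ s ^ 2 - Y₂ s ^ 2)
      (φ' := fun s => 2 * Y₁ s * (Φ s - Y₁ s)⁻¹ - 2 * Y₂ s * (Φ s - Y₂ s)⁻¹) (a := 0) (b := A)
      ((yc1.pow 2).sub (yc2.pow 2)) ?_ ?_ ⟨le_rfl, hA.le⟩ ⟨hA.le, le_rfl⟩ hA.le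
    · simp only [e1, e2, e3, e4] at this
      linarith
    · intro s hs
      have d1 := (yd1 s hs).2
      have d2 := (yd2 s hs).2
      rw [(yi1 s (Ioo_subset_Icc_self hs)).2] at d1
      rw [(yi2 s (Ioo_subset_Icc_self hs)).2] at d2
      exact (lie_sq_deriv d1 rfl).sub (lie_sq_deriv d2 rfl)
    · intro s hs
      obtain ⟨r1, r1'⟩ := yi1 s (Ioo_subset_Icc_self hs)
      obtain ⟨r2, r2'⟩ := yi2 s (Ioo_subset_Icc_self hs)
      have n1 := hr1 (Y₁ s) ⟨by linarith [r1.1], (yd1 s hs).1.2⟩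
      have n2 := hr2 (Y₂ s) ⟨by linarith [r2.1], (yd2 s hs).1.2⟩
      rw [r1'] at n1
      rw [r2'] at n2
      have hYY : Y₁ s ≤ Y₂ s := by
        by_contra h
        push Not at h
        have k1 := sa2 ⟨by linarith [r2.1], r2.2⟩ ⟨by linarith [r2.1], by linarith [r1.2]⟩ h
        have k2 := hle (Y₁ s) ⟨by linarith [r1.1], r1.2⟩
        linarith
      have hprod : 0 < (Φ s - Y₂ s) * (Φ s - Y₁ s) := mul_pos_of_neg_of_neg n2 n1
      rw [lie_frac hprod]
      apply div_nonneg _ hprod.le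
      have := hΦ.neg s hs
      nlinarith
  have LOW : q ^ 2 - p ^ 2 ≤ c₂ ^ 2 - c₁ ^ 2 := by
    obtain ⟨Y₁, yc1, yi1, yj1, yd1⟩ := lie_inv_mono i1
      (a1.cont.mono (Icc_subset_Icc le_rfl (by linarith)))
      (fun t ht => a1.deriv t ⟨ht.1, by linarith [ht.2]⟩)
      (fun t ht => hl1 t ⟨ht.1, by linarith [ht.2]⟩)
    obtain ⟨Y₂, yc2, yi2, yj2, yd2⟩ := lie_inv_mono j1
      (a2.cont.mono (Icc_subset_Icc le_rfl (by linarith)))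
      (fun t ht => a2.deriv t ⟨ht.1, by linarith [ht.2]⟩)
      (fun t ht => hl2 t ⟨ht.1, by linarith [ht.2]⟩)
    have e1 := yj1 c₁ ⟨i1.le, le_rfl⟩
    have e2 := yj1 (-p) ⟨le_rfl, i1.le⟩
    have e3 := yj2 c₂ ⟨j1.le, le_rfl⟩
    have e4 := yj2 (-q) ⟨le_rfl, j1.le⟩
    rw [uc1, a1.ulo] at *
    rw [uc2, a2.ulo] at *
    have := lie_mono (φ := fun s => Y₂ s ^ 2 - Y₁ s ^ 2)
      (φ' := fun s => 2 * Y₂ s * (Φ s - Y₂ s)⁻¹ - 2 * Y₁ s * (Φ s - Y₁ s)⁻¹) (a := 0) (b := A)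
      ((yc2.pow 2).sub (yc1.pow 2)) ?_ ?_ ⟨le_rfl, hA.le⟩ ⟨hA.le, le_rfl⟩ hA.le
    · simp only [e1, e2, e3, e4] at this
      linarith
    · intro s hs
      have d1 := (yd1 s hs).2
      have d2 := (yd2 s hs).2
      rw [(yi1 s (Ioo_subset_Icc_self hs)).2] at d1
      rw [(yi2 s (Ioo_subset_Icc_self hs)).2] at d2
      exact (lie_sq_deriv d2 rfl).sub (lie_sq_deriv d1 rfl)
    · intro s hs
      obtain ⟨r1, r1'⟩ := yi1 s (Ioo_subset_Icc_self hs)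
      obtain ⟨r2, r2'⟩ := yi2 s (Ioo_subset_Icc_self hs)
      have n1 := hl1 (Y₁ s) ⟨(yd1 s hs).1.1, by linarith [r1.2]⟩
      have n2 := hl2 (Y₂ s) ⟨(yd2 s hs).1.1, by linarith [r2.2]⟩
      rw [r1'] at n1
      rw [r2'] at n2
      have hYY : Y₂ s ≤ Y₁ s := by
        by_contra h
        push Not at h
        have k1 := sm2 ⟨by linarith [r1.1], by linarith [r2.2]⟩ ⟨r2.1, by linarith [r2.2]⟩ h
        have k2 := hle (Y₁ s) ⟨r1.1, by linarith [r1.2]⟩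
        linarith
      have hprod : 0 < (Φ s - Y₁ s) * (Φ s - Y₂ s) := mul_pos n1 n2
      rw [lie_frac hprod]
      apply div_nonneg _ hprod.le
      have := hΦ.neg s hs
      nlinarith
  linarith

lemma LieArc.sym_aux {Φ φ u₁ u₂ : ℝ → ℝ} {A U p q : ℝ} (hΦ : LiePhi Φ φ A U)
    (a1 : LieArc Φ U (-p) p u₁) (a2 : LieArc Φ U (-q) q u₂) (hpq : p ≤ q) :
    p = q ∧ EqOn u₁ u₂ (Icc (-p) p) := by
  have hp := a1.hhi
  by_cases hex : ∃ η ∈ Ioo (-p) p, u₁ η = u₂ η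
  · obtain ⟨η, hη, he⟩ := hex
    have := LieArc.unique hΦ a1 a2 hη ⟨by linarith [hη.1], by linarith [hη.2]⟩ he
    exact this.2
  exfalso
  push Not at hex
  have c1 : ContinuousOn u₁ (Ioo (-p) p) := a1.cont.mono Ioo_subset_Icc_self
  have c2 : ContinuousOn u₂ (Ioo (-p) p) := a2.cont.mono
    (Ioo_subset_Icc_self.trans (Icc_subset_Icc (by linarith) hpq))
  have key : ∀ (w₁ w₂ : ℝ → ℝ), ContinuousOn w₁ (Ioo (-p) p) → ContinuousOn w₂ (Ioo (-p) p) →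
      (∀ η ∈ Ioo (-p) p, w₁ η ≠ w₂ η) → w₁ 0 < w₂ 0 → ∀ η ∈ Ioo (-p) p, w₁ η < w₂ η := by
    intro w₁ w₂ h1 h2 hne h0 η hη
    by_contra hcon
    push Not at hcon
    have hz : (0 : ℝ) ∈ Ioo (-p) p := ⟨by linarith, hp⟩
    obtain ⟨z, hz1, hz2⟩ := isPreconnected_Ioo.intermediate_value₂ hz hη h1 h2 h0.le hcon
    exact hne z hz1 hz2
  rcases lt_or_gt_of_ne (hex 0 ⟨by linarith, hp⟩) with h | h
  · exact LieArc.lt_false hΦ a1 a2 hpq (key u₁ u₂ c1 c2 hex h)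
  · have hlt := key u₂ u₁ c2 c1 (fun η hη => (hex η hη).symm) h
    rcases eq_or_lt_of_le hpq with he | hl
    · subst he
      exact LieArc.lt_false hΦ a2 a1 le_rfl hlt
    · -- near `p` we get a contradiction with `u₂ p > 0 = u₁ p`
      have p2 := (a2.mem p ⟨by linarith, hl⟩).1
      have hd := (a1.cont.sub (a2.cont.mono (Icc_subset_Icc (by linarith) hpq)))
      have := intermediate_value_Ioo' (by linarith : (0 : ℝ) ≤ p)
        (hd.mono (Icc_subset_Icc (by linarith) le_rfl))
      obtain ⟨z, hz, hz0⟩ := this (show (0 : ℝ) ∈ _ from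
        ⟨by simp only [Pi.sub_apply, a1.uhi]; linarith, by simp only [Pi.sub_apply]; linarith⟩)
      simp only [Pi.sub_apply] at hz0
      have := hlt z ⟨by linarith [hz.1], hz.2⟩
      linarith

lemma LieArc.sym {Φ φ u₁ u₂ : ℝ → ℝ} {A U p q : ℝ} (hΦ : LiePhi Φ φ A U)
    (a1 : LieArc Φ U (-p) p u₁) (a2 : LieArc Φ U (-q) q u₂) :
    p = q ∧ EqOn u₁ u₂ (Icc (-p) p) := by
  rcases le_total p q with h | h
  · exact LieArc.sym_aux hΦ a1 a2 h
  · obtain ⟨e, h'⟩ := LieArc.sym_aux hΦ a2 a1 h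
    subst e
    exact ⟨rfl, h'.symm⟩


structure LieSys (F f g G : ℝ → ℝ) (a d : ℝ) : Prop where
  ha : 0 < a
  had : a < d
  dF : ∀ x ∈ Ioo (-d) d, HasDerivAt F (f x) x
  cf : ContinuousOn f (Ioo (-d) d)
  dG : ∀ x ∈ Ioo (-d) d, HasDerivAt G (g x) x
  cg : ContinuousOn g (Ioo (-d) d)
  oF : ∀ x, F (-x) = - F x
  og : ∀ x, g (-x) = - g x
  eG : ∀ x, G (-x) = G x
  G0 : G 0 = 0
  gpos : ∀ x, 0 < x → x < d → 0 < g x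
  Fneg : ∀ x ∈ Ioo 0 a, F x < 0
  Fa : F a = 0
  Fpos : ∀ x ∈ Ioo a d, 0 < F x
  Fmono : MonotoneOn F (Ico a d)

lemma LieSys.strictMono_G {F f g G : ℝ → ℝ} {a d e : ℝ} (S : LieSys F f g G a d) (hed : e < d) :
    StrictMonoOn G (Icc 0 e) := by
  have ha := S.ha
  have had := S.had
  refine lie_strictMono (φ' := g) ?_ ?_ ?_
  · intro x hx
    exact (S.dG x ⟨by linarith [hx.1], by linarith [hx.2]⟩).continuousAt.continuousWithinAt
  · intro x hx
    exact S.dG x ⟨by linarith [hx.1], by linarith [hx.2]⟩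
  · intro x hx
    exact S.gpos x hx.1 (by linarith [hx.2])

lemma LieSys.exists_phi {F f g G : ℝ → ℝ} {a d e : ℝ} (S : LieSys F f g G a d) (hae : a < e)
    (hed : e < d) : ∃ Φ φ : ℝ → ℝ, LiePhi Φ φ (G a) (G e) ∧ ∀ x ∈ Icc 0 e, Φ (G x) = F x := by
  have ha := S.ha
  have hm := S.strictMono_G hed
  obtain ⟨Ψ, c1, i1, j1, k1⟩ := lie_inv_mono (φ := G) (φ' := g) (a := 0) (b := e) (by linarith)
    (fun x hx => (S.dG x ⟨by linarith [hx.1], by linarith [hx.2]⟩).continuousAt.continuousWithinAt)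
    (fun x hx => S.dG x ⟨by linarith [hx.1], by linarith [hx.2]⟩)
    (fun x hx => S.gpos x hx.1 (by linarith [hx.2]))
  rw [S.G0] at c1 i1 k1
  have hGa : 0 < G a := by
    have := hm ⟨le_rfl, by linarith⟩ ⟨ha.le, hae.le⟩ ha
    rwa [S.G0] at this
  have hGae : G a < G e := hm ⟨ha.le, hae.le⟩ ⟨by linarith, le_rfl⟩ hae
  have hstrip : ∀ s ∈ Ioo 0 (G e), Ψ s ∈ Ioo (-d) d := fun s hs =>
    ⟨by linarith [(k1 s hs).1.1], by linarith [(k1 s hs).1.2]⟩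
  have hlt : ∀ x ∈ Icc 0 e, ∀ y ∈ Icc 0 e, G x < G y → x < y := fun x hx y hy h =>
    (hm.lt_iff_lt hx hy).1 h
  have hle : ∀ x ∈ Icc 0 e, ∀ y ∈ Icc 0 e, G x ≤ G y → x ≤ y := fun x hx y hy h =>
    (hm.le_iff_le hx hy).1 h
  have haI : a ∈ Icc 0 e := ⟨ha.le, hae.le⟩
  refine ⟨fun s => F (Ψ s), fun s => f (Ψ s) * (g (Ψ s))⁻¹, ?_, fun x hx => by simp only [j1 x hx]⟩
  refine ⟨hGa, hGae, ?_, ?_, ?_, ?_, ?_, ?_⟩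
  · intro s hs
    exact (S.dF _ (hstrip s hs)).comp s (k1 s hs).2
  · have cΨ : ContinuousOn Ψ (Ioo 0 (G e)) := c1.mono Ioo_subset_Icc_self
    refine (S.cf.comp cΨ hstrip).mul ((S.cg.comp cΨ hstrip).inv₀ ?_)
    intro s hs
    exact (S.gpos _ (k1 s hs).1.1 (by linarith [(k1 s hs).1.2])).ne'
  · intro s hs
    have hs' : s ∈ Ioo 0 (G e) := ⟨hs.1, hs.2.trans hGae⟩
    have h1 := i1 s (Ioo_subset_Icc_self hs')
    exact S.Fneg _ ⟨(k1 s hs').1.1, hlt _ h1.1 _ haI (by rw [h1.2]; exact hs.2)⟩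
  · simp only [j1 a haI, S.Fa]
  · intro s hs
    have hs' : s ∈ Ioo 0 (G e) := ⟨hGa.trans hs.1, hs.2⟩
    have h1 := i1 s (Ioo_subset_Icc_self hs')
    exact S.Fpos _ ⟨hlt _ haI _ h1.1 (by rw [h1.2]; exact hs.1), (hstrip s hs').2⟩
  · intro s hs t ht hst
    have hs' : s ∈ Ioo 0 (G e) := ⟨hGa.trans_le hs.1, hs.2⟩
    have ht' : t ∈ Ioo 0 (G e) := ⟨hGa.trans_le ht.1, ht.2⟩
    have h1 := i1 s (Ioo_subset_Icc_self hs')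
    have h2 := i1 t (Ioo_subset_Icc_self ht')
    exact S.Fmono ⟨hle _ haI _ h1.1 (by rw [h1.2]; exact hs.1), (hstrip s hs').2⟩
      ⟨hle _ haI _ h2.1 (by rw [h2.2]; exact ht.1), (hstrip t ht').2⟩
      (hle _ h1.1 _ h2.1 (by rw [h1.2, h2.2]; exact hst))

/-- A periodic solution inside the strip which avoids the origin and keeps meeting `x = 0`. -/
structure LieSol (F g : ℝ → ℝ) (e T : ℝ) (x y : ℝ → ℝ) : Prop where
  sol : IsSolution F g x y
  hT : 0 < T
  px : Function.Periodic x T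
  py : Function.Periodic y T
  strip : ∀ t, |x t| < e
  noz : ∀ t, x t = 0 → y t ≠ 0
  zero : ∃ t, x t = 0

lemma LieSol.neg {F f g G : ℝ → ℝ} {a d e T : ℝ} {x y : ℝ → ℝ} (S : LieSys F f g G a d)
    (h : LieSol F g e T x y) : LieSol F g e T (fun t => - x t) (fun t => - y t) := by
  refine ⟨?_, h.hT, ?_, ?_, ?_, ?_, ?_⟩
  · intro t
    obtain ⟨h1, h2⟩ := h.sol t
    constructor
    · exact HasDerivAt.congr_deriv h1.neg (by rw [S.oF]; ring)
    · exact HasDerivAt.congr_deriv h2.neg (by rw [S.og])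
  · intro t; simp only [h.px t]
  · intro t; simp only [h.py t]
  · intro t; simp only [abs_neg]; exact h.strip t
  · intro t ht
    have := h.noz t (by simpa using ht)
    simpa using this
  · obtain ⟨t, ht⟩ := h.zero
    exact ⟨t, by simp [ht]⟩

lemma LieSol.cx {F g : ℝ → ℝ} {e T : ℝ} {x y : ℝ → ℝ} (h : LieSol F g e T x y) : Continuous x :=
  continuous_iff_continuousAt.2 fun t => (h.sol t).1.continuousAt

lemma LieSol.cy {F g : ℝ → ℝ} {e T : ℝ} {x y : ℝ → ℝ} (h : LieSol F g e T x y) : Continuous y :=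
  continuous_iff_continuousAt.2 fun t => (h.sol t).2.continuousAt

/-- Around every time with `x > 0` there is a maximal interval with `x > 0`. -/
lemma LieSol.through {F g : ℝ → ℝ} {e T : ℝ} {x y : ℝ → ℝ} (h : LieSol F g e T x y) {t : ℝ}
    (ht : 0 < x t) : ∃ t₀ t₁, t₀ < t ∧ t < t₁ ∧ x t₀ = 0 ∧ x t₁ = 0 ∧
      ∀ s ∈ Ioo t₀ t₁, 0 < x s := by
  obtain ⟨z, hz⟩ := h.zero
  have hcl : IsClosed {s | x s = 0} := isClosed_eq h.cx continuous_const
  have hT := h.hT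
  -- zeros on both sides
  have hzn : ∀ n : ℤ, x (z + n * T) = 0 := by
    intro n
    rw [← hz]
    exact (h.px.int_mul n) z
  have hR : ∃ r, t ≤ r ∧ x r = 0 := by
    obtain ⟨n, hn⟩ := exists_int_gt ((t - z) / T)
    refine ⟨z + n * T, ?_, hzn n⟩
    rw [div_lt_iff₀ hT] at hn
    linarith
  have hL : ∃ l, l ≤ t ∧ x l = 0 := by
    obtain ⟨n, hn⟩ := exists_int_lt ((t - z) / T)
    refine ⟨z + n * T, ?_, hzn n⟩
    rw [lt_div_iff₀ hT] at hn
    linarith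
  obtain ⟨r, hr, hxr⟩ := hR
  obtain ⟨l, hl, hxl⟩ := hL
  obtain ⟨t₁, ht1⟩ := (isCompact_Icc.inter_right hcl).exists_isLeast
    (⟨r, ⟨hr, le_rfl⟩, hxr⟩ : (Icc t r ∩ {s | x s = 0}).Nonempty)
  obtain ⟨t₀, ht0⟩ := (isCompact_Icc.inter_right hcl).exists_isGreatest
    (⟨l, ⟨le_rfl, hl⟩, hxl⟩ : (Icc l t ∩ {s | x s = 0}).Nonempty)
  have x1 : x t₁ = 0 := ht1.1.2
  have x0 : x t₀ = 0 := ht0.1.2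
  have ht1' : t < t₁ := lt_of_le_of_ne ht1.1.1.1 (by rintro rfl; linarith)
  have ht0' : t₀ < t := lt_of_le_of_ne ht0.1.1.2 (by rintro rfl; linarith)
  refine ⟨t₀, t₁, ht0', ht1', x0, x1, ?_⟩
  intro s hs
  have hne : ∀ s ∈ Ioo t₀ t₁, x s ≠ 0 := by
    intro s hs h0
    rcases le_total s t with hst | hst
    · have := ht0.2 ⟨⟨by linarith [ht0.1.1.1, hs.1], hst⟩, h0⟩
      linarith [hs.1]
    · have := ht1.2 ⟨⟨hst, by linarith [ht1.1.1.2, hs.2]⟩, h0⟩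
      linarith [hs.2]
  by_contra hcon
  push Not at hcon
  obtain ⟨w, hw, hw0⟩ := isPreconnected_Ioo.intermediate_value₂ hs (⟨ht0', ht1'⟩ : t ∈ Ioo t₀ t₁)
    h.cx.continuousOn (continuous_const (y := (0 : ℝ))).continuousOn hcon ht.le
  exact hne w hw hw0

lemma LieSol.start_pos {F g : ℝ → ℝ} {e T : ℝ} {x y : ℝ → ℝ} (h : LieSol F g e T x y)
    (hF0 : F 0 = 0) {s : ℝ} (hx : x s = 0) :
    (0 < y s → ∃ ε > 0, (∀ t ∈ Ioo s (s + ε), 0 < x t) ∧ (∀ t ∈ Ioo (s - ε) s, x t < 0)) := by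
  intro hy
  have hd := (h.sol s).1
  rw [hx, hF0, sub_zero] at hd
  have := hd.tendsto_slope
  have hev := this.eventually (lt_mem_nhds hy)
  rw [eventually_nhdsWithin_iff, Metric.eventually_nhds_iff] at hev
  obtain ⟨ε, hε, hball⟩ := hev
  refine ⟨ε, hε, ?_, ?_⟩
  · intro t ht
    have := hball (y := t) (by rw [Real.dist_eq, abs_lt]; constructor <;> linarith [ht.1, ht.2])
      (by simpa using ht.1.ne')
    rw [slope_def_field, hx, sub_zero] at this
    exact (div_pos_iff_of_pos_right (by linarith [ht.1])).1 this
  · intro t ht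
    have := hball (y := t) (by rw [Real.dist_eq, abs_lt]; constructor <;> linarith [ht.1, ht.2])
      (by simpa using ht.2.ne)
    rw [slope_def_field, hx, sub_zero] at this
    have h2 : t - s < 0 := by linarith [ht.2]
    by_contra hc
    push Not at hc
    have := div_nonpos_of_nonneg_of_nonpos hc h2.le
    linarith

lemma LieSol.start_neg {F f g G : ℝ → ℝ} {a d e T : ℝ} {x y : ℝ → ℝ} (S : LieSys F f g G a d)
    (h : LieSol F g e T x y) (hF0 : F 0 = 0) {s : ℝ} (hx : x s = 0) (hy : y s < 0) :
    ∃ ε > 0, (∀ t ∈ Ioo s (s + ε), x t < 0) ∧ (∀ t ∈ Ioo (s - ε) s, 0 < x t) := by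
  obtain ⟨ε, hε, h1, h2⟩ := (h.neg S).start_pos hF0 (s := s) (by simp [hx]) (by linarith)
  exact ⟨ε, hε, fun t ht => by linarith [h1 t ht], fun t ht => by linarith [h2 t ht]⟩

/-- The arc attached to a maximal interval with `x > 0`. -/
lemma LieSol.arc {F f g G Φ φ : ℝ → ℝ} {a d e T : ℝ} {x y : ℝ → ℝ} (S : LieSys F f g G a d)
    (hF0 : F 0 = 0) (hae : a < e) (hed : e < d) (hΦ : ∀ x ∈ Icc 0 e, Φ (G x) = F x)
    (_hP : LiePhi Φ φ (G a) (G e))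
    (h : LieSol F g e T x y) {t₀ t₁ : ℝ} (ht : t₀ < t₁) (x0 : x t₀ = 0) (x1 : x t₁ = 0)
    (hpos : ∀ s ∈ Ioo t₀ t₁, 0 < x s) :
    ∃ u, LieArc Φ (G e) (y t₁) (y t₀) u ∧ (∀ t ∈ Icc t₀ t₁, u (y t) = G (x t)) ∧
      (∀ t ∈ Ioo t₀ t₁, y t ∈ Ioo (y t₁) (y t₀)) := by
  have ha := S.ha
  have hlt : ∀ t, x t < e := fun t => (abs_lt.1 (h.strip t)).2
  have hgp : ∀ t ∈ Ioo t₀ t₁, 0 < g (x t) := fun t ht' =>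
    S.gpos _ (hpos t ht') ((hlt t).trans hed)
  have hnn : ∀ t ∈ Icc t₀ t₁, 0 ≤ x t := by
    intro t ht'
    rcases eq_or_lt_of_le ht'.1 with h1 | h1
    · rw [← h1, x0]
    rcases eq_or_lt_of_le ht'.2 with h2 | h2
    · rw [h2, x1]
    exact (hpos t ⟨h1, h2⟩).le
  have sa : StrictAntiOn y (Icc t₀ t₁) := lie_strictAnti (φ' := fun t => -(g (x t)))
    h.cy.continuousOn (fun t _ => (h.sol t).2) (fun t ht' => by linarith [hgp t ht'])
  obtain ⟨τ, c1, i1, j1, k1⟩ := lie_inv_anti (φ := y) (φ' := fun t => -(g (x t))) ht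
    h.cy.continuousOn (fun t _ => (h.sol t).2) (fun t ht' => by linarith [hgp t ht'])
  refine ⟨fun η => G (x (τ η)), ⟨?_, ?_, ?_, ?_, ?_, ?_, ?_⟩, ?_, ?_⟩
  · -- y t₁ < 0
    refine lt_of_le_of_ne ?_ (h.noz t₁ x1)
    by_contra hc
    push Not at hc
    obtain ⟨ε, hε, -, h2⟩ := h.start_pos hF0 x1 hc
    set w := max ((t₀ + t₁) / 2) (t₁ - ε / 2)
    have w1 : (t₀ + t₁) / 2 ≤ w := le_max_left _ _
    have w2 : t₁ - ε / 2 ≤ w := le_max_right _ _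
    have w3 : w < t₁ := max_lt (by linarith) (by linarith)
    have := h2 w ⟨by linarith, w3⟩
    have := hpos w ⟨by linarith, w3⟩
    linarith
  · refine lt_of_le_of_ne ?_ (h.noz t₀ x0).symm
    by_contra hc
    push Not at hc
    obtain ⟨ε, hε, h2, -⟩ := h.start_neg S hF0 x0 hc
    set w := min ((t₀ + t₁) / 2) (t₀ + ε / 2)
    have w1 : w ≤ (t₀ + t₁) / 2 := min_le_left _ _
    have w2 : w ≤ t₀ + ε / 2 := min_le_right _ _
    have w3 : t₀ < w := lt_min (by linarith) (by linarith)
    have := h2 w ⟨w3, by linarith⟩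
    have := hpos w ⟨w3, by linarith⟩
    linarith
  · have cG : ContinuousOn G (Ioo (-d) d) := fun x hx =>
      (S.dG x hx).continuousAt.continuousWithinAt
    refine cG.comp (h.cx.comp_continuousOn c1) ?_
    intro η _
    have := abs_lt.1 (h.strip (τ η))
    exact ⟨by simp only [Function.comp]; linarith, by simp only [Function.comp]; linarith⟩
  · simp only [j1 t₁ ⟨ht.le, le_rfl⟩, x1, S.G0]
  · simp only [j1 t₀ ⟨le_rfl, ht.le⟩, x0, S.G0]
  · intro η hη
    have h1 := (k1 η hη).1
    have hx := hpos _ h1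
    have hm := S.strictMono_G hed
    constructor
    · have := hm ⟨le_rfl, by linarith⟩ ⟨hx.le, (hlt _).le⟩ hx
      rwa [S.G0] at this
    · exact hm ⟨hx.le, (hlt _).le⟩ ⟨by linarith, le_rfl⟩ (hlt _)
  · intro η hη
    obtain ⟨h1, h2⟩ := k1 η hη
    have hx := hpos _ h1
    have hy : y (τ η) = η := (i1 η (Ioo_subset_Icc_self hη)).2
    have hg := hgp _ h1
    have d1 := (h.sol (τ η)).1.comp η h2
    have d2 := (S.dG (x (τ η)) ⟨by linarith, by linarith [hlt (τ η)]⟩).comp η d1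
    refine HasDerivAt.congr_deriv d2 ?_
    rw [hy, hΦ _ ⟨hx.le, (hlt _).le⟩]
    field_simp
    ring
  · intro t ht'
    simp only [j1 t ht']
  · intro t ht'
    exact ⟨sa ⟨ht'.1.le, ht'.2.le⟩ ⟨ht.le, le_rfl⟩ ht'.2,
      sa ⟨le_rfl, ht.le⟩ ⟨ht'.1.le, ht'.2.le⟩ ht'.1⟩

lemma LieSol.arc_from {F g : ℝ → ℝ} {e T : ℝ} {x y : ℝ → ℝ}
    (hF0 : F 0 = 0) (h : LieSol F g e T x y) {s : ℝ} (hx : x s = 0) (hy : 0 < y s) :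
    ∃ t₁, s < t₁ ∧ x t₁ = 0 ∧ ∀ t ∈ Ioo s t₁, 0 < x t := by
  obtain ⟨ε, hε, h1, -⟩ := h.start_pos hF0 hx hy
  obtain ⟨t₀, t₁, k1, k2, k3, k4, k5⟩ := h.through (h1 (s + ε / 2) ⟨by linarith, by linarith⟩)
  have hs : t₀ = s := by
    rcases lt_trichotomy t₀ s with hh | hh | hh
    · have := k5 s ⟨hh, by linarith⟩; linarith
    · exact hh
    · have := h1 t₀ ⟨hh, by linarith⟩; linarith
  subst hs
  exact ⟨t₁, by linarith, k4, k5⟩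

lemma LieSol.arc_to {F f g G : ℝ → ℝ} {a d e T : ℝ} {x y : ℝ → ℝ} (S : LieSys F f g G a d)
    (hF0 : F 0 = 0) (h : LieSol F g e T x y) {s : ℝ} (hx : x s = 0) (hy : y s < 0) :
    ∃ t₀, t₀ < s ∧ x t₀ = 0 ∧ ∀ t ∈ Ioo t₀ s, 0 < x t := by
  obtain ⟨ε, hε, -, h1⟩ := h.start_neg S hF0 hx hy
  obtain ⟨t₀, t₁, k1, k2, k3, k4, k5⟩ := h.through (h1 (s - ε / 2) ⟨by linarith, by linarith⟩)
  have hs : t₁ = s := by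
    rcases lt_trichotomy t₁ s with hh | hh | hh
    · have := h1 t₁ ⟨by linarith, hh⟩; linarith
    · exact hh
    · have := k5 s ⟨by linarith, hh⟩; linarith
  subst hs
  exact ⟨t₀, by linarith, k3, k5⟩


lemma LieSol.sym_arc_pos {F f g G Φ φ : ℝ → ℝ} {a d e T : ℝ} {x y : ℝ → ℝ}
    (S : LieSys F f g G a d)
    (hF0 : F 0 = 0) (hae : a < e) (hed : e < d) (hΦ : ∀ x ∈ Icc 0 e, Φ (G x) = F x)
    (hP : LiePhi Φ φ (G a) (G e))
    (h : LieSol F g e T x y) {s : ℝ} (hs : x s = 0) (hy : 0 < y s)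
    (hext : (∀ z, x z = 0 → |y z| ≤ |y s|) ∨ (∀ z, x z = 0 → |y s| ≤ |y z|)) :
    ∃ u, LieArc Φ (G e) (-|y s|) |y s| u := by
  obtain ⟨t₁, h1, x1, p1⟩ := h.arc_from hF0 hs hy
  obtain ⟨u₁, A1, -, -⟩ := h.arc S hF0 hae hed hΦ hP h1 hs x1 p1
  obtain ⟨t₀, h0, x0, p0⟩ := (h.neg S).arc_to S hF0 (s := s) (by simp [hs]) (by linarith)
  obtain ⟨u₂, A2, -, -⟩ := (h.neg S).arc S hF0 hae hed hΦ hP h0 x0 (by simp [hs]) p0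
  have l1 := A1.hlo
  have l2 := A2.hhi
  have hn := LieArc.nest hP A1 A2
  have hn' := LieArc.nest hP A2 A1
  have x0' : x t₀ = 0 := by simpa using x0
  have e1 := hext.imp (fun k => k t₁ x1) (fun k => k t₁ x1)
  have e0 := hext.imp (fun k => k t₀ x0') (fun k => k t₀ x0')
  have b1 : |y t₁| = - y t₁ := abs_of_neg l1
  have b0 : |y t₀| = - y t₀ := abs_of_neg (by linarith)
  have bs : |y s| = y s := abs_of_pos hy
  rw [bs]
  have key : y t₁ = - y s ∨ - y t₀ = y s := by
    rcases hext with k | k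
    · have k1 := k t₁ x1
      have k0 := k t₀ x0'
      rw [b1, bs] at k1
      rw [b0, bs] at k0
      rcases eq_or_lt_of_le k0 with q | q
      · right; exact q
      · left; have := hn' q; linarith
    · have k1 := k t₁ x1
      have k0 := k t₀ x0'
      rw [b1, bs] at k1
      rw [b0, bs] at k0
      rcases eq_or_lt_of_le k0 with q | q
      · right; exact q.symm
      · left; have := hn q; linarith
  rcases key with k | k
  · rw [k] at A1; exact ⟨u₁, A1⟩
  · rw [k] at A2; exact ⟨u₂, A2⟩

lemma LieSol.sym_arc {F f g G Φ φ : ℝ → ℝ} {a d e T : ℝ} {x y : ℝ → ℝ}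
    (S : LieSys F f g G a d)
    (hF0 : F 0 = 0) (hae : a < e) (hed : e < d) (hΦ : ∀ x ∈ Icc 0 e, Φ (G x) = F x)
    (hP : LiePhi Φ φ (G a) (G e))
    (h : LieSol F g e T x y) {s : ℝ} (hs : x s = 0)
    (hext : (∀ z, x z = 0 → |y z| ≤ |y s|) ∨ (∀ z, x z = 0 → |y s| ≤ |y z|)) :
    ∃ u, LieArc Φ (G e) (-|y s|) |y s| u := by
  rcases lt_or_gt_of_ne (h.noz s hs) with hy | hy
  · have := (h.neg S).sym_arc_pos S hF0 hae hed hΦ hP (s := s) (by simp [hs]) (by linarith)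
      (by simpa using hext)
    simpa using this
  · exact h.sym_arc_pos S hF0 hae hed hΦ hP hs hy hext

lemma LieSol.const_abs {F f g G Φ φ : ℝ → ℝ} {a d e T : ℝ} {x y : ℝ → ℝ}
    (S : LieSys F f g G a d)
    (hF0 : F 0 = 0) (hae : a < e) (hed : e < d) (hΦ : ∀ x ∈ Icc 0 e, Φ (G x) = F x)
    (hP : LiePhi Φ φ (G a) (G e))
    (h : LieSol F g e T x y) :
    ∃ M u, LieArc Φ (G e) (-M) M u ∧ ∀ z, x z = 0 → |y z| = M := by
  have hK : IsCompact (Icc 0 T ∩ {t | x t = 0}) :=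
    isCompact_Icc.inter_right (isClosed_eq h.cx continuous_const)
  have hred : ∀ z, x z = 0 → ∃ w ∈ Icc 0 T ∩ {t | x t = 0}, y z = y w := by
    intro z hz
    obtain ⟨w, hw, hxy⟩ := Function.Periodic.exists_mem_Ico₀
      (f := fun t => (x t, y t)) (c := T) (fun t => by simp [h.px t, h.py t]) h.hT z
    simp only [Prod.mk.injEq] at hxy
    exact ⟨w, ⟨⟨hw.1, hw.2.le⟩, by simp [← hxy.1, hz]⟩, hxy.2⟩
  have hne : (Icc 0 T ∩ {t | x t = 0}).Nonempty := by
    obtain ⟨z, hz⟩ := h.zero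
    obtain ⟨w, hw, -⟩ := hred z hz
    exact ⟨w, hw⟩
  have hc : ContinuousOn (fun t => |y t|) (Icc 0 T ∩ {t | x t = 0}) := h.cy.abs.continuousOn
  obtain ⟨p, hp, pmax⟩ := hK.exists_isMaxOn hne hc
  obtain ⟨q, hq, qmin⟩ := hK.exists_isMinOn hne hc
  have pm : ∀ z, x z = 0 → |y z| ≤ |y p| := by
    intro z hz
    obtain ⟨w, hw, e⟩ := hred z hz
    rw [e]; exact pmax hw
  have qm : ∀ z, x z = 0 → |y q| ≤ |y z| := by
    intro z hz
    obtain ⟨w, hw, e⟩ := hred z hz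
    rw [e]; exact qmin hw
  obtain ⟨u, A⟩ := h.sym_arc S hF0 hae hed hΦ hP hp.2 (Or.inl pm)
  obtain ⟨v, B⟩ := h.sym_arc S hF0 hae hed hΦ hP hq.2 (Or.inr qm)
  have hpq := (LieArc.sym hP A B).1
  refine ⟨_, u, A, fun z hz => le_antisymm (pm z hz) ?_⟩
  rw [hpq]; exact qm z hz

lemma LieSol.exists_pos {F f g G : ℝ → ℝ} {a d e T : ℝ} {x y : ℝ → ℝ}
    (S : LieSys F f g G a d) (hF0 : F 0 = 0) (h : LieSol F g e T x y) :
    ∃ t₀ t₁, t₀ < t₁ ∧ x t₀ = 0 ∧ x t₁ = 0 ∧ ∀ s ∈ Ioo t₀ t₁, 0 < x s := by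
  obtain ⟨z, hz⟩ := h.zero
  rcases lt_or_gt_of_ne (h.noz z hz) with hy | hy
  · obtain ⟨t₀, a1, a2, a3⟩ := h.arc_to S hF0 hz hy
    exact ⟨t₀, z, a1, a2, hz, a3⟩
  · obtain ⟨t₁, a1, a2, a3⟩ := h.arc_from hF0 hz hy
    exact ⟨z, t₁, a1, hz, a2, a3⟩

lemma LieSol.point_pos {F f g G Φ φ : ℝ → ℝ} {a d e T T' : ℝ} {x y x' y' : ℝ → ℝ}
    (S : LieSys F f g G a d)
    (hF0 : F 0 = 0) (hae : a < e) (hed : e < d) (hΦ : ∀ x ∈ Icc 0 e, Φ (G x) = F x)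
    (hP : LiePhi Φ φ (G a) (G e))
    (h : LieSol F g e T x y) (h' : LieSol F g e T' x' y') {t : ℝ} (ht : 0 < x t) :
    ∃ t', x' t' = x t ∧ y' t' = y t := by
  obtain ⟨M, u, A, hM⟩ := h.const_abs S hF0 hae hed hΦ hP
  obtain ⟨M', u', A', hM'⟩ := h'.const_abs S hF0 hae hed hΦ hP
  have hMM := (LieArc.sym hP A A').1
  subst hMM
  obtain ⟨t₀, t₁, k0, k1, x0, x1, pos⟩ := h.through ht
  obtain ⟨w, B, hw, hmem⟩ := h.arc S hF0 hae hed hΦ hP (k0.trans k1) x0 x1 pos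
  obtain ⟨s₀, s₁, k, x0', x1', pos'⟩ := h'.exists_pos S hF0
  obtain ⟨w', B', hw', hmem'⟩ := h'.arc S hF0 hae hed hΦ hP k x0' x1' pos'
  have y0 : y t₀ = M := by rw [← hM t₀ x0, abs_of_pos B.hhi]
  have y1 : y t₁ = -M := by rw [← hM t₁ x1, abs_of_neg B.hlo]; ring
  have y0' : y' s₀ = M := by rw [← hM' s₀ x0', abs_of_pos B'.hhi]
  have y1' : y' s₁ = -M := by rw [← hM' s₁ x1', abs_of_neg B'.hlo]; ring
  rw [y0, y1] at B hmem
  rw [y0', y1'] at B'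
  have hη := hmem t ⟨k0, k1⟩
  have hη' : y t ∈ Icc (y' s₁) (y' s₀) := by rw [y0', y1']; exact ⟨hη.1.le, hη.2.le⟩
  obtain ⟨r, hr, hyr⟩ := intermediate_value_Icc' k.le h'.cy.continuousOn hη'
  refine ⟨r, ?_, hyr⟩
  have e1 := hw t ⟨k0.le, k1.le⟩
  have e2 := hw' r hr
  rw [hyr, ← (LieArc.sym hP B B').2 ⟨hη.1.le, hη.2.le⟩, e1] at e2
  have hr0 : 0 ≤ x' r := by
    rcases eq_or_lt_of_le hr.1 with q | q
    · rw [← q, x0']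
    rcases eq_or_lt_of_le hr.2 with q' | q'
    · rw [q', x1']
    · exact (pos' r ⟨q, q'⟩).le
  exact ((S.strictMono_G hed).injOn ⟨ht.le, (abs_lt.1 (h.strip t)).2.le⟩
    ⟨hr0, (abs_lt.1 (h'.strip r)).2.le⟩ e2).symm

lemma LieSol.point {F f g G Φ φ : ℝ → ℝ} {a d e T T' : ℝ} {x y x' y' : ℝ → ℝ}
    (S : LieSys F f g G a d)
    (hF0 : F 0 = 0) (hae : a < e) (hed : e < d) (hΦ : ∀ x ∈ Icc 0 e, Φ (G x) = F x)
    (hP : LiePhi Φ φ (G a) (G e))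
    (h : LieSol F g e T x y) (h' : LieSol F g e T' x' y') (t : ℝ) :
    ∃ t', x' t' = x t ∧ y' t' = y t := by
  rcases lt_trichotomy (x t) 0 with hx | hx | hx
  · obtain ⟨r, a1, a2⟩ := (h.neg S).point_pos S hF0 hae hed hΦ hP (h'.neg S) (t := t)
      (by linarith)
    exact ⟨r, by linarith, by linarith⟩
  · obtain ⟨M, u, A, hM⟩ := h.const_abs S hF0 hae hed hΦ hP
    obtain ⟨M', u', A', hM'⟩ := h'.const_abs S hF0 hae hed hΦ hP
    have hMM := (LieArc.sym hP A A').1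
    subst hMM
    obtain ⟨s₀, s₁, k, x0', x1', pos'⟩ := h'.exists_pos S hF0
    obtain ⟨w', B', hw', hmem'⟩ := h'.arc S hF0 hae hed hΦ hP k x0' x1' pos'
    have y0' : y' s₀ = M := by rw [← hM' s₀ x0', abs_of_pos B'.hhi]
    have y1' : y' s₁ = -M := by rw [← hM' s₁ x1', abs_of_neg B'.hlo]; ring
    have := hM t hx
    rcases abs_choice (y t) with q | q
    · exact ⟨s₀, by rw [x0', hx], by linarith⟩
    · exact ⟨s₁, by rw [x1', hx], by linarith⟩
  · exact h.point_pos S hF0 hae hed hΦ hP h' hx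

lemma LieSol.range_eq {F f g G : ℝ → ℝ} {a d e T T' : ℝ} {x y x' y' : ℝ → ℝ}
    (S : LieSys F f g G a d) (hF0 : F 0 = 0) (hae : a < e) (hed : e < d)
    (h : LieSol F g e T x y) (h' : LieSol F g e T' x' y') :
    (Set.range fun t => (x t, y t)) = Set.range fun t => (x' t, y' t) := by
  obtain ⟨Φ, φ, hP, hΦ⟩ := S.exists_phi hae hed
  apply Set.Subset.antisymm
  · rintro _ ⟨t, rfl⟩
    obtain ⟨r, a1, a2⟩ := h.point S hF0 hae hed hΦ hP h' t
    exact ⟨r, by simp [a1, a2]⟩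
  · rintro _ ⟨t, rfl⟩
    obtain ⟨r, a1, a2⟩ := h'.point S hF0 hae hed hΦ hP h t
    exact ⟨r, by simp [a1, a2]⟩


lemma lie_ftc {f : ℝ → ℝ} {d x : ℝ} (hc : ContinuousOn f (Ioo (-d) d)) (hx : x ∈ Ioo (-d) d) :
    HasDerivAt (fun x => ∫ u in (0:ℝ)..x, f u) (f x) x := by
  have hd : 0 < d := by linarith [hx.1, hx.2]
  apply intervalIntegral.integral_hasDerivAt_right
  · apply ContinuousOn.intervalIntegrable
    apply hc.mono
    have : Set.uIcc 0 x ⊆ Ioo (-d) d := by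
      have := Set.ordConnected_Ioo (a := -d) (b := d)
      exact this.uIcc_subset ⟨by linarith, hd⟩ hx
    exact this
  · exact hc.stronglyMeasurableAtFilter isOpen_Ioo x hx
  · exact hc.continuousAt (isOpen_Ioo.mem_nhds hx)

lemma lie_even {g : ℝ → ℝ} (og : ∀ x, g (-x) = - g x) (x : ℝ) :
    ∫ u in (0:ℝ)..(-x), g u = ∫ u in (0:ℝ)..x, g u := by
  have h1 : ∫ u in (0:ℝ)..x, g (-u) = ∫ u in (-x)..(-0), g u :=
    intervalIntegral.integral_comp_neg (fun u => g u)
  simp only [og, neg_zero, intervalIntegral.integral_neg] at h1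
  rw [intervalIntegral.integral_symm, ← h1, neg_neg]

lemma lie_mono_glue {F : ℝ → ℝ} {a b d : ℝ} (hab : a < b) (hbd : b < d)
    (ca : ContinuousAt F a) (cb : ContinuousAt F b)
    (h1 : StrictMonoOn F (Ioc a b)) (h2 : MonotoneOn F (Ioo b d)) : MonotoneOn F (Ico a d) := by
  have k1 : MonotoneOn F (Icc a b) := by
    rw [← Ioc_insert_left hab.le]
    refine h1.monotoneOn.insert_of_continuousWithinAt ?_ ca.continuousWithinAt
    rw [← mem_closure_iff_clusterPt, closure_Ioc hab.ne]
    exact ⟨le_rfl, hab.le⟩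
  have k2 : MonotoneOn F (Ico b d) := by
    rw [← Ioo_insert_left hbd]
    refine h2.insert_of_continuousWithinAt ?_ cb.continuousWithinAt
    rw [← mem_closure_iff_clusterPt, closure_Ioo hbd.ne]
    exact ⟨le_rfl, hbd.le⟩
  have := k1.union_right k2 (isGreatest_Icc hab.le) (isLeast_Ico hbd)
  rwa [Icc_union_Ico_eq_Ico hab.le hbd] at this

/-- The part of the hypotheses that does not involve the sign of `F` near `0`. -/
structure LieBase (F f g G : ℝ → ℝ) (a d : ℝ) : Prop where
  ha : 0 < a
  had : a < d
  dF : ∀ x ∈ Ioo (-d) d, HasDerivAt F (f x) x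
  cf : ContinuousOn f (Ioo (-d) d)
  dG : ∀ x ∈ Ioo (-d) d, HasDerivAt G (g x) x
  cg : ContinuousOn g (Ioo (-d) d)
  oF : ∀ x, F (-x) = - F x
  og : ∀ x, g (-x) = - g x
  eG : ∀ x, G (-x) = G x
  G0 : G 0 = 0
  gpos : ∀ x, 0 < x → x < d → 0 < g x
  Fa : F a = 0
  Fpos : ∀ x ∈ Ioo a d, 0 < F x
  Fmono : MonotoneOn F (Ico a d)

lemma lie_base {f g F : ℝ → ℝ} {d : ℝ} (h : ExtLienardHyp f g F d) :
    ∃ G a, LieBase F f g G a d ∧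
      ((∀ x ∈ Ioo 0 a, F x < 0) ∨ (∀ x ∈ Ioo 0 a, 0 < F x)) := by
  obtain ⟨hd, cf, cg, hF, oF, og, gpos, a, b, ha, had, hz, -, hab, hbd, m1, m2⟩ := h
  have dF : ∀ x ∈ Ioo (-d) d, HasDerivAt F (f x) x := by
    intro x hx
    have : F = fun x => ∫ u in (0:ℝ)..x, f u := funext hF
    rw [this]
    exact lie_ftc cf hx
  have Fa : F a = 0 := (hz a (by linarith) had).2 (by simp)
  have mono := lie_mono_glue hab hbd (dF a ⟨by linarith, had⟩).continuousAt
    (dF b ⟨by linarith, hbd⟩).continuousAt m1 m2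
  refine ⟨fun x => ∫ u in (0:ℝ)..x, g u, a,
    ⟨ha, had, dF, cf, fun x hx => lie_ftc cg hx, cg, oF, og, lie_even og, by simp, gpos, Fa, ?_,
      mono⟩, ?_⟩
  · intro x hx
    have h0 : F a ≤ F x := mono ⟨le_rfl, had⟩ ⟨hx.1.le, hx.2⟩ hx.1.le
    rw [Fa] at h0
    refine lt_of_le_of_ne h0 fun h1 => ?_
    have := (hz x (by linarith [hx.1]) hx.2).1 h1.symm
    rcases this with q | q | q <;> linarith [hx.1]
  · have hne : ∀ x ∈ Ioo 0 a, F x ≠ 0 := by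
      intro x hx h1
      have := (hz x (by linarith [hx.1]) (by linarith [hx.2])).1 h1
      rcases this with q | q | q <;> linarith [hx.1, hx.2]
    by_contra hcon
    push Not at hcon
    obtain ⟨⟨p, hp, hp0⟩, ⟨q, hq, hq0⟩⟩ := hcon
    have hc : ContinuousOn F (Ioo 0 a) := fun x hx =>
      (dF x ⟨by linarith [hx.1], by linarith [hx.2]⟩).continuousAt.continuousWithinAt
    have : (0:ℝ) ∈ F '' Ioo 0 a :=
      (isPreconnected_Ioo.intermediate_value hq hp hc) ⟨hq0, hp0⟩
    obtain ⟨r, hr, hr0⟩ := this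
    exact hne r hr hr0

/-- A nonconstant periodic solution in the strip. -/
structure LieOrb (F g : ℝ → ℝ) (d T : ℝ) (x y : ℝ → ℝ) : Prop where
  sol : IsSolution F g x y
  hT : 0 < T
  px : Function.Periodic x T
  py : Function.Periodic y T
  nc : ∃ t₁ t₂ : ℝ, x t₁ ≠ x t₂ ∨ y t₁ ≠ y t₂
  strip : ∀ t, |x t| < d

lemma LieOrb.cx {F g : ℝ → ℝ} {e T : ℝ} {x y : ℝ → ℝ} (h : LieOrb F g e T x y) : Continuous x :=
  continuous_iff_continuousAt.2 fun t => (h.sol t).1.continuousAt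

lemma LieOrb.cy {F g : ℝ → ℝ} {e T : ℝ} {x y : ℝ → ℝ} (h : LieOrb F g e T x y) : Continuous y :=
  continuous_iff_continuousAt.2 fun t => (h.sol t).2.continuousAt

lemma LieBase.F0 {F f g G : ℝ → ℝ} {a d : ℝ} (B : LieBase F f g G a d) : F 0 = 0 := by
  have := B.oF 0
  rw [neg_zero] at this
  linarith

lemma LieBase.Gpos {F f g G : ℝ → ℝ} {a d : ℝ} (B : LieBase F f g G a d) {x : ℝ}
    (hx : |x| < d) (h0 : x ≠ 0) : 0 < G x := by
  have hp : ∀ z, 0 < z → z < d → 0 < G z := by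
    intro z hz hzd
    have hd := B.ha.trans B.had
    have : StrictMonoOn G (Icc 0 z) := by
      refine lie_strictMono (φ' := g) ?_ ?_ ?_
      · intro x hx
        exact (B.dG x ⟨by linarith [hx.1], by linarith [hx.2]⟩).continuousAt.continuousWithinAt
      · intro x hx
        exact B.dG x ⟨by linarith [hx.1], by linarith [hx.2]⟩
      · intro x hx
        exact B.gpos x hx.1 (by linarith [hx.2])
    have := this ⟨le_rfl, hz.le⟩ ⟨hz.le, le_rfl⟩ hz
    rwa [B.G0] at this
  rw [abs_lt] at hx
  rcases lt_or_gt_of_ne h0 with q | q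
  · rw [← B.eG]; exact hp _ (by linarith) (by linarith)
  · exact hp _ q hx.2

lemma LieOrb.energy {F f g G : ℝ → ℝ} {a d T : ℝ} {x y : ℝ → ℝ} (B : LieBase F f g G a d)
    (h : LieOrb F g d T x y) (t : ℝ) :
    HasDerivAt (fun t => G (x t) + y t ^ 2 / 2) (-(g (x t) * F (x t))) t := by
  have h1 := (B.dG (x t) (abs_lt.1 (h.strip t))).comp t (h.sol t).1
  have h2 := ((h.sol t).2.pow 2).div_const 2
  exact HasDerivAt.congr_deriv (h1.add h2) (by push_cast; ring)

lemma LieOrb.zero {F f g G : ℝ → ℝ} {a d T : ℝ} {x y : ℝ → ℝ} (B : LieBase F f g G a d)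
    (h : LieOrb F g d T x y) : ∃ t, x t = 0 := by
  obtain ⟨p, hp, pmax⟩ := (isCompact_Icc (a := 0) (b := T)).exists_isMaxOn
    ⟨0, le_rfl, h.hT.le⟩ h.cy.continuousOn
  have pm : ∀ t, y t ≤ y p := by
    intro t
    obtain ⟨w, hw, e⟩ := h.py.exists_mem_Ico₀ h.hT t
    rw [e]
    exact pmax ⟨hw.1, hw.2.le⟩
  have hloc : IsLocalMax y p := Filter.Eventually.of_forall pm
  have h0 := hloc.hasDerivAt_eq_zero (h.sol p).2
  refine ⟨p, ?_⟩
  have hs := abs_lt.1 (h.strip p)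
  rcases lt_trichotomy (x p) 0 with q | q | q
  · have := B.gpos (- x p) (by linarith) (by linarith)
    rw [B.og] at this
    linarith
  · exact q
  · have := B.gpos (x p) q hs.2
    linarith

lemma LieOrb.no_diss {F f g G : ℝ → ℝ} {a d T : ℝ} {x y : ℝ → ℝ} (B : LieBase F f g G a d)
    (h : LieOrb F g d T x y) (hp : ∀ x ∈ Ioo 0 a, 0 < F x) : False := by
  have F0 := B.F0
  have ha := B.ha
  have had := B.had
  have hFn : ∀ z, 0 < z → z < d → 0 ≤ F z := by
    intro z h1 h2
    rcases lt_trichotomy z a with q | q | q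
    · exact (hp z ⟨h1, q⟩).le
    · rw [q, B.Fa]
    · exact (B.Fpos z ⟨q, h2⟩).le
  have hgF : ∀ z, |z| < d → 0 ≤ g z * F z := by
    intro z hz
    rw [abs_lt] at hz
    rcases lt_trichotomy z 0 with q | q | q
    · have h1 := B.gpos (-z) (by linarith) (by linarith)
      have h2 := hFn (-z) (by linarith) (by linarith)
      rw [B.og] at h1
      rw [B.oF] at h2
      nlinarith
    · rw [q, F0]; simp
    · exact mul_nonneg (B.gpos z q hz.2).le (hFn z q hz.2)
  have hE := h.energy B
  have hanti : Antitone (fun t => G (x t) + y t ^ 2 / 2) := by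
    apply antitone_of_deriv_nonpos
    · intro t; exact (hE t).differentiableAt
    · intro t
      rw [(hE t).deriv]
      linarith [hgF (x t) (h.strip t)]
  have hper : Function.Periodic (fun t => G (x t) + y t ^ 2 / 2) T := by
    intro t
    simp only [h.px t, h.py t]
  have hconst : ∀ t, G (x t) + y t ^ 2 / 2 = G (x 0) + y 0 ^ 2 / 2 := by
    intro t
    apply le_antisymm
    · obtain ⟨w, hw, e⟩ := hper.exists_mem_Ico₀ h.hT t
      rw [e]
      exact hanti hw.1
    · obtain ⟨w, hw, e⟩ := hper.exists_mem_Ico₀ h.hT t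
      rw [e]
      have h1 : G (x T) + y T ^ 2 / 2 ≤ G (x w) + y w ^ 2 / 2 := hanti hw.2.le
      have h2 : G (x (0 + T)) + y (0 + T) ^ 2 / 2 = G (x 0) + y 0 ^ 2 / 2 := hper 0
      rw [zero_add] at h2
      linarith
  have hgz : ∀ t, g (x t) * F (x t) = 0 := by
    intro t
    have h1 : HasDerivAt (fun t => G (x t) + y t ^ 2 / 2) 0 t := by
      have : (fun t => G (x t) + y t ^ 2 / 2) = fun _ => G (x 0) + y 0 ^ 2 / 2 := funext hconst
      rw [this]
      exact hasDerivAt_const _ _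
    have := (hE t).unique h1
    linarith
  have hno : ∀ t, x t ∉ Ioo 0 a ∧ - x t ∉ Ioo 0 a := by
    intro t
    constructor
    · intro hm
      have := mul_pos (B.gpos _ hm.1 (hm.2.trans had)) (hp _ hm)
      linarith [hgz t]
    · intro hm
      have := mul_pos (B.gpos _ hm.1 (hm.2.trans had)) (hp _ hm)
      rw [B.og, B.oF] at this
      linarith [hgz t]
  obtain ⟨z, hz⟩ := h.zero B
  have hx0 : ∀ t, x t = 0 := by
    intro t
    rcases lt_trichotomy (x t) 0 with q | q | q
    · exfalso
      have hm : max (-a / 2) (x t) ∈ Icc (x t) (x z) := by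
        rw [hz]; exact ⟨le_max_right _ _, max_le (by linarith) q.le⟩
      obtain ⟨r, hr⟩ := mem_range_of_exists_le_of_exists_ge h.cx ⟨t, hm.1⟩ ⟨z, hm.2⟩
      refine (hno r).2 ⟨?_, ?_⟩
      · rw [hr]
        have : max (-a / 2) (x t) < 0 := max_lt (by linarith) q
        linarith
      · rw [hr]
        linarith [le_max_left (-a / 2) (x t)]
    · exact q
    · exfalso
      have hm : min (a / 2) (x t) ∈ Icc (x z) (x t) := by
        rw [hz]; exact ⟨le_min (by linarith) q.le, min_le_right _ _⟩
      obtain ⟨r, hr⟩ := mem_range_of_exists_le_of_exists_ge h.cx ⟨z, hm.1⟩ ⟨t, hm.2⟩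
      refine (hno r).1 ⟨?_, ?_⟩
      · rw [hr]
        exact lt_min (by linarith) q
      · rw [hr]
        linarith [min_le_left (a / 2) (x t)]
  have hy0 : ∀ t, y t = 0 := by
    intro t
    have h1 := (h.sol t).1
    have h2 : HasDerivAt x 0 t := by
      have : x = fun _ => 0 := funext hx0
      rw [this]; exact hasDerivAt_const _ _
    have := h1.unique h2
    rw [hx0 t, F0] at this
    linarith
  obtain ⟨t₁, t₂, hn⟩ := h.nc
  simp [hx0, hy0] at hn

lemma LieOrb.noz {F f g G : ℝ → ℝ} {a d T : ℝ} {x y : ℝ → ℝ} (B : LieBase F f g G a d)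
    (h : LieOrb F g d T x y) (hneg : ∀ x ∈ Ioo 0 a, F x < 0) (s : ℝ) (hs : x s = 0) :
    y s ≠ 0 := by
  intro hys
  have F0 := B.F0
  have ha := B.ha
  have had := B.had
  have hE := h.energy B
  have hG0 : ∀ t, 0 ≤ G (x t) := by
    intro t
    by_cases q : x t = 0
    · rw [q, B.G0]
    · exact (B.Gpos (h.strip t) q).le
  have hv0 : ∀ t, G (x t) + y t ^ 2 / 2 ≤ 0 → x t = 0 ∧ y t = 0 := by
    intro t ht
    have h1 := hG0 t
    have h2 := sq_nonneg (y t)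
    constructor
    · by_contra q
      have := B.Gpos (h.strip t) q
      linarith
    · have : y t ^ 2 = 0 := by linarith
      simpa using this
  have hgF : ∀ z, |z| < a → g z * F z ≤ 0 := by
    intro z hz
    rw [abs_lt] at hz
    rcases lt_trichotomy z 0 with q | q | q
    · have h1 := B.gpos (-z) (by linarith) (by linarith)
      have h2 := hneg (-z) ⟨by linarith, by linarith⟩
      rw [B.og] at h1
      rw [B.oF] at h2
      nlinarith
    · rw [q, F0]; simp
    · exact mul_nonpos_of_nonneg_of_nonpos (B.gpos z q (by linarith)).le (hneg z ⟨q, hz.2⟩).le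
  obtain ⟨τ₀, hτ₀⟩ : ∃ t, 0 < G (x t) + y t ^ 2 / 2 := by
    by_contra hcon
    push Not at hcon
    obtain ⟨t₁, t₂, hn⟩ := h.nc
    simp [hv0 t₁ (hcon t₁), hv0 t₂ (hcon t₂)] at hn
  obtain ⟨τ, hτs, hτ⟩ : ∃ τ, τ < s ∧ 0 < G (x τ) + y τ ^ 2 / 2 := by
    obtain ⟨n, hn⟩ := exists_nat_gt ((τ₀ - s) / T)
    refine ⟨τ₀ - n * T, ?_, ?_⟩
    · rw [div_lt_iff₀ h.hT] at hn
      linarith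
    · rw [h.px.sub_nat_mul_eq, h.py.sub_nat_mul_eq]
      exact hτ₀
  have hvc : Continuous (fun t => G (x t) + y t ^ 2 / 2) :=
    continuous_iff_continuousAt.2 fun t => (hE t).continuousAt
  have hK : IsCompact (Icc τ s ∩ {t | G (x t) + y t ^ 2 / 2 = 0}) :=
    isCompact_Icc.inter_right (isClosed_eq hvc continuous_const)
  obtain ⟨σ, hσ, hleast⟩ := hK.exists_isLeast
    ⟨s, ⟨hτs.le, le_rfl⟩, by simp [hs, hys, B.G0]⟩
  have hσ0 : G (x σ) + y σ ^ 2 / 2 = 0 := hσ.2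
  have hτσ : τ < σ := by
    rcases eq_or_lt_of_le hσ.1.1 with q | q
    · rw [q] at hτ; linarith
    · exact q
  have hxσ := (hv0 σ hσ0.le).1
  have hev : ∀ᶠ t in nhds σ, |x t| < a := by
    apply h.cx.abs.continuousAt.eventually_lt continuousAt_const
    rw [hxσ, abs_zero]; exact ha
  rw [Metric.eventually_nhds_iff] at hev
  obtain ⟨δ, hδ, hball⟩ := hev
  set r := max τ (σ - δ / 2) with hr
  have hrσ : r < σ := max_lt hτσ (by linarith)
  have hr1 : σ - δ / 2 ≤ r := le_max_right _ _
  have hmono : MonotoneOn (fun t => G (x t) + y t ^ 2 / 2) (Icc r σ) := by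
    refine lie_mono hvc.continuousOn (fun t _ => hE t) ?_
    intro t ht
    have := hball (y := t) (by rw [Real.dist_eq, abs_lt]; constructor <;> linarith [ht.1, ht.2])
    linarith [hgF _ this]
  have hle : G (x r) + y r ^ 2 / 2 ≤ G (x σ) + y σ ^ 2 / 2 :=
    hmono ⟨le_rfl, hrσ.le⟩ ⟨hrσ.le, le_rfl⟩ hrσ.le
  rw [hσ0] at hle
  have hr0 : G (x r) + y r ^ 2 / 2 = 0 :=
    le_antisymm hle (by have := hG0 r; positivity)
  have := hleast ⟨⟨le_max_left _ _, hrσ.le.trans hσ.1.2⟩, hr0⟩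
  linarith

lemma LieOrb.toSol {F f g G : ℝ → ℝ} {a d T : ℝ} {x y : ℝ → ℝ} (B : LieBase F f g G a d)
    (h : LieOrb F g d T x y) (hneg : ∀ x ∈ Ioo 0 a, F x < 0) :
    ∃ e₀ < d, ∀ e, e₀ < e → LieSol F g e T x y := by
  obtain ⟨p, hp, pmax⟩ := (isCompact_Icc (a := 0) (b := T)).exists_isMaxOn
    ⟨0, le_rfl, h.hT.le⟩ h.cx.abs.continuousOn
  refine ⟨|x p|, h.strip p, fun e he => ⟨h.sol, h.hT, h.px, h.py, ?_, h.noz B hneg, h.zero B⟩⟩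
  intro t
  obtain ⟨w, hw, e⟩ := h.px.exists_mem_Ico₀ h.hT t
  rw [e]
  have : |x w| ≤ |x p| := pmax ⟨hw.1, hw.2.le⟩
  linarith

lemma lie_unique {f g F : ℝ → ℝ} {d T T' : ℝ} {x y x' y' : ℝ → ℝ} (hF : ExtLienardHyp f g F d)
    (h : LieOrb F g d T x y) (h' : LieOrb F g d T' x' y') :
    (Set.range fun t => (x t, y t)) = Set.range fun t => (x' t, y' t) := by
  obtain ⟨G, a, B, hn | hp⟩ := lie_base hF
  · obtain ⟨e₁, he₁, k₁⟩ := h.toSol B hn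
    obtain ⟨e₂, he₂, k₂⟩ := h'.toSol B hn
    have S : LieSys F f g G a d := ⟨B.ha, B.had, B.dF, B.cf, B.dG, B.cg, B.oF, B.og, B.eG, B.G0,
      B.gpos, hn, B.Fa, B.Fpos, B.Fmono⟩
    obtain ⟨e, h1, h2⟩ := exists_between (max_lt (max_lt he₁ he₂) B.had)
    have m1 := le_max_left (max e₁ e₂) a
    have m2 := le_max_right (max e₁ e₂) a
    have m3 := le_max_left e₁ e₂
    have m4 := le_max_right e₁ e₂
    exact LieSol.range_eq S B.F0 (by linarith) h2 (k₁ e (by linarith)) (k₂ e (by linarith))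
  · exact (h.no_diss B hp).elim


/-- The amplitude of the unique limit cycle is independent of the behaviour of `F`
beyond the amplitude: if `F₂` agrees with `F₁` on `|x| ≤ α̂`, the amplitude of the
unique limit cycle `Γ₁` of the first system, then `Γ₁` is also the unique limit
cycle of the second system. -/
theorem amplitude_independent_of_asymptotics
    (f₁ f₂ g F₁ F₂ : ℝ → ℝ) (d : ℝ)
    (h1 : ExtLienardHyp f₁ g F₁ d) (h2 : ExtLienardHyp f₂ g F₂ d)
    (Γ₁ : Set (ℝ × ℝ)) (αhat : ℝ)
    (hΓ₁ : IsPeriodicOrbitOf F₁ g Γ₁)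
    (hstrip : ∀ p ∈ Γ₁, |p.1| < d)
    (hamp : IsGreatest {r : ℝ | ∃ p ∈ Γ₁, |p.1| = r} αhat)
    (heq : ∀ x : ℝ, |x| ≤ αhat → F₂ x = F₁ x) :
    IsPeriodicOrbitOf F₂ g Γ₁ ∧
      ∀ Γ : Set (ℝ × ℝ), IsPeriodicOrbitOf F₂ g Γ → (∀ p ∈ Γ, |p.1| < d) →
        Γ = Γ₁ := by
  obtain ⟨x, y, hsol, ⟨T, hT, px, py⟩, nc, rfl⟩ := hΓ₁
  have hsol2 : IsSolution F₂ g x y := by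
    intro t
    have hle : |x t| ≤ αhat := hamp.2 ⟨(x t, y t), ⟨t, rfl⟩, rfl⟩
    rw [heq _ hle]
    exact hsol t
  refine ⟨⟨x, y, hsol2, ⟨T, hT, px, py⟩, nc, rfl⟩, ?_⟩
  rintro Γ ⟨x', y', hsol', ⟨T', hT', px', py'⟩, nc', rfl⟩ hs
  exact lie_unique h2 ⟨hsol', hT', px', py', nc', fun t => hs _ ⟨t, rfl⟩⟩
    ⟨hsol2, hT, px, py, nc, fun t => hstrip _ ⟨t, rfl⟩⟩
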